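/- arXiv:2503.14086 — 2 statements merged into one kernel-verified Lean document; each statement's English description precedes it below -/
import Mathlib

section
/- Let 𝒴 be a convex cone with ℝ^N_0 ⊆ 𝒴 ⊆ L^0(Ω,𝐅_T,P) such that K^𝒴 is closed under componentwise P-a.s. convergence of sequences. If there exists a probability measure P' equivalent to P such that Y^i ∈ L^1(P') for every Y ∈ 𝒴 and every i, then NCA(𝒴) holds if and only if ℳ_e(𝒴) ≠ ∅. -/
open MeasureTheory Filter Topology

namespace CollectiveArb

variable {Ω : Type*}

/-- Terminal gains `K_i` of admissible (predictable) strategies for an agent with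
filtration `F`, trading the assets indexed by `A`, over times `1,…,T`. -/
def gainsSet {J : ℕ} (F : ℕ → MeasurableSpace Ω) (T : ℕ)
    (A : Finset (Fin J)) (X : Fin J → ℕ → Ω → ℝ) : Set (Ω → ℝ) :=
  { g | ∃ H : Fin J → ℕ → Ω → ℝ,
      (∀ j ∈ A, ∀ s, 1 ≤ s → s ≤ T → Measurable[F (s - 1)] (H j s)) ∧
      g = fun ω => ∑ j ∈ A, ∑ s ∈ Finset.Icc 1 T, H j s ω * (X j s ω - X j (s - 1) ω) }

/-- No collective arbitrage for the gains sets `K` and the exchange set `Y`: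
`(K₁ × ⋯ × K_N + Y) ∩ L⁰₊ = {0}`. -/
def NCA {N : ℕ} [MeasurableSpace Ω] (P : Measure Ω)
    (K : Fin N → Set (Ω → ℝ)) (Y : Set (Fin N → Ω → ℝ)) : Prop :=
  ∀ k : Fin N → Ω → ℝ, ∀ y ∈ Y, (∀ i, k i ∈ K i) →
    (∀ i, ∀ᵐ ω ∂P, 0 ≤ k i ω + y i ω) →
    ∀ i, (fun ω => k i ω + y i ω) =ᵐ[P] fun _ => (0 : ℝ)

/-- `K^𝒴 = ⨉ᵢ (Kᵢ − L⁰₊(ℱᵢ_T)) + 𝒴`. -/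
def KY {N : ℕ} [MeasurableSpace Ω] (P : Measure Ω)
    (FT : Fin N → MeasurableSpace Ω)
    (K : Fin N → Set (Ω → ℝ)) (Y : Set (Fin N → Ω → ℝ)) : Set (Fin N → Ω → ℝ) :=
  { f | ∃ (k l y : Fin N → Ω → ℝ), y ∈ Y ∧ (∀ i, k i ∈ K i) ∧
      (∀ i, Measurable[FT i] (l i) ∧ (∀ᵐ ω ∂P, 0 ≤ l i ω)) ∧
      ∀ i, f i = fun ω => k i ω - l i ω + y i ω }

/-- `ℝ^N_0`: zero-sum deterministic exchanges, viewed as constant random vectors. -/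
def zeroSum (Ω : Type*) (N : ℕ) : Set (Fin N → Ω → ℝ) :=
  { y | ∃ x : Fin N → ℝ, (∑ i, x i) = 0 ∧ ∀ i, y i = fun _ => x i }

/-- `span(ℝ^N_0, Y_1, …, Y_R)`: the finite-dimensional space of exchanges generated
by `ℝ^N_0` and the random vectors `Ys 1, …, Ys R`. -/
def spanExch {N R : ℕ} (Ys : Fin R → Fin N → Ω → ℝ) : Set (Fin N → Ω → ℝ) :=
  { y | ∃ (x : Fin N → ℝ) (c : Fin R → ℝ), (∑ i, x i) = 0 ∧
      ∀ i, y i = fun ω => x i + ∑ r, c r * Ys r i ω }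

/-- `span(𝒴₀ ∪ {g})` for a vector subspace `𝒴₀`. -/
def spanWith {N : ℕ} (Y0 : Set (Fin N → Ω → ℝ)) (g : Fin N → Ω → ℝ) :
    Set (Fin N → Ω → ℝ) :=
  { y | ∃ w ∈ Y0, ∃ c : ℝ, ∀ i, y i = fun ω => w i ω + c * g i ω }

/-- Equivalent martingale measures `Mᵢₑ` for the assets in `A`, w.r.t. the filtration `F`. -/
def martMeasures {J : ℕ} [MeasurableSpace Ω] (P : Measure Ω)
    (F : ℕ → MeasurableSpace Ω) (T : ℕ) (A : Finset (Fin J))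
    (X : Fin J → ℕ → Ω → ℝ) : Set (Measure Ω) :=
  { Q | IsProbabilityMeasure Q ∧ Q ≪ P ∧ P ≪ Q ∧
      ∀ j ∈ A, (∀ t, t ≤ T → Integrable (X j t) Q) ∧
        ∀ s t, s ≤ t → t ≤ T → X j s =ᵐ[Q] Q[X j t | F s] }

/-- Equivalent collective martingale measures `ℳₑ(𝒴)`. -/
def MeY {J N : ℕ} [MeasurableSpace Ω] (P : Measure Ω)
    (F : Fin N → ℕ → MeasurableSpace Ω) (T : ℕ) (assets : Fin N → Finset (Fin J))
    (X : Fin J → ℕ → Ω → ℝ) (Y : Set (Fin N → Ω → ℝ)) : Set (Fin N → Measure Ω) :=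
  { Q | (∀ i, Q i ∈ martMeasures P (F i) T (assets i) X) ∧
      (∀ y ∈ Y, ∀ i, Integrable (y i) (Q i)) ∧
      ∀ y ∈ Y, (∑ i, ∫ ω, y i ω ∂(Q i)) ≤ 0 }

/-- `ℳ^φ_e(𝒴) = {Q ∈ ℳₑ(𝒴) : E_{Qⁱ}[|φⁱ|] < ∞ ∀ i}`. -/
def MeYphi {J N : ℕ} [MeasurableSpace Ω] (P : Measure Ω)
    (F : Fin N → ℕ → MeasurableSpace Ω) (T : ℕ) (assets : Fin N → Finset (Fin J))
    (X : Fin J → ℕ → Ω → ℝ) (Y : Set (Fin N → Ω → ℝ))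
    (φ : Fin N → Ω → ℝ) : Set (Fin N → Measure Ω) :=
  { Q | Q ∈ MeY P F T assets X Y ∧ ∀ i, Integrable (φ i) (Q i) }

/-- Closedness of a set of random vectors under componentwise `P`-a.s. convergence
of sequences (within `L⁰(Ω, 𝐅_T, P)`). -/
def ClosedAS {N : ℕ} [MeasurableSpace Ω] (P : Measure Ω)
    (FT : Fin N → MeasurableSpace Ω) (S : Set (Fin N → Ω → ℝ)) : Prop :=
  ∀ (f : ℕ → Fin N → Ω → ℝ) (g : Fin N → Ω → ℝ),
    (∀ n, f n ∈ S) → (∀ i, Measurable[FT i] (g i)) →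
    (∀ i, ∀ᵐ ω ∂P, Tendsto (fun n => f n i ω) atTop (𝓝 (g i ω))) →
    g ∈ S

/-- Collective superhedging price `ρ^𝒴₊(f)` (with `inf ∅ = +∞`). -/
noncomputable def rhoPlus {N : ℕ} [MeasurableSpace Ω] (P : Measure Ω)
    (K : Fin N → Set (Ω → ℝ)) (Y : Set (Fin N → Ω → ℝ))
    (f : Fin N → Ω → ℝ) : EReal :=
  sInf { z : EReal | ∃ m : Fin N → ℝ, z = ((∑ i, m i : ℝ) : EReal) ∧
      ∃ k : Fin N → Ω → ℝ, (∀ i, k i ∈ K i) ∧ ∃ y ∈ Y,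
        ∀ i, ∀ᵐ ω ∂P, f i ω ≤ m i + k i ω + y i ω }

/-- Collective subhedging price `ρ^𝒴₋(f)` (with `sup ∅ = −∞`). -/
noncomputable def rhoMinus {N : ℕ} [MeasurableSpace Ω] (P : Measure Ω)
    (K : Fin N → Set (Ω → ℝ)) (Y : Set (Fin N → Ω → ℝ))
    (f : Fin N → Ω → ℝ) : EReal :=
  sSup { z : EReal | ∃ m : Fin N → ℝ, z = ((∑ i, m i : ℝ) : EReal) ∧
      ∃ k : Fin N → Ω → ℝ, (∀ i, k i ∈ K i) ∧ ∃ y ∈ Y,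
        ∀ i, ∀ᵐ ω ∂P, m i + k i ω - y i ω ≤ f i ω }

/-- `ρ^𝒴₊(f)` is attained. -/
def rhoPlusAttained {N : ℕ} [MeasurableSpace Ω] (P : Measure Ω)
    (K : Fin N → Set (Ω → ℝ)) (Y : Set (Fin N → Ω → ℝ))
    (f : Fin N → Ω → ℝ) : Prop :=
  ∃ (m : Fin N → ℝ) (k y : Fin N → Ω → ℝ), y ∈ Y ∧ (∀ i, k i ∈ K i) ∧
    (∀ i, ∀ᵐ ω ∂P, f i ω ≤ m i + k i ω + y i ω) ∧
    rhoPlus P K Y f = ((∑ i, m i : ℝ) : EReal)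

/-- `ρ^𝒴₋(f)` is attained. -/
def rhoMinusAttained {N : ℕ} [MeasurableSpace Ω] (P : Measure Ω)
    (K : Fin N → Set (Ω → ℝ)) (Y : Set (Fin N → Ω → ℝ))
    (f : Fin N → Ω → ℝ) : Prop :=
  ∃ (m : Fin N → ℝ) (k y : Fin N → Ω → ℝ), y ∈ Y ∧ (∀ i, k i ∈ K i) ∧
    (∀ i, ∀ᵐ ω ∂P, m i + k i ω - y i ω ≤ f i ω) ∧
    rhoMinus P K Y f = ((∑ i, m i : ℝ) : EReal)

/-- `f` is `𝒴`-collectively replicable: `f ∈ ℝ^N + (K₁ × ⋯ × K_N) + 𝒴` in `L⁰`. -/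
def Replicable {N : ℕ} [MeasurableSpace Ω] (P : Measure Ω)
    (K : Fin N → Set (Ω → ℝ)) (Y : Set (Fin N → Ω → ℝ))
    (f : Fin N → Ω → ℝ) : Prop :=
  ∃ (m : Fin N → ℝ) (k y : Fin N → Ω → ℝ), y ∈ Y ∧ (∀ i, k i ∈ K i) ∧
    ∀ i, f i =ᵐ[P] fun ω => m i + k i ω + y i ω


/-- A positive continuous functional on `L¹` of a finite measure is integration against a bounded
nonnegative function. -/
theorem exists_density_of_nonneg_functional {S : Type*} [MeasurableSpace S] (μ : Measure S)
    [IsFiniteMeasure μ] (φ : Lp ℝ 1 μ →L[ℝ] ℝ)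
    (hpos : ∀ f : Lp ℝ 1 μ, 0 ≤ᵐ[μ] f → 0 ≤ φ f) :
    ∃ (z : S → ℝ) (M : ℝ), Measurable z ∧ (∀ s, 0 ≤ z s) ∧ (∀ s, z s ≤ M) ∧
      ∀ f : Lp ℝ 1 μ, φ f = ∫ s, z s * f s ∂μ := by
  set J : Lp ℝ 2 μ →L[ℝ] Lp ℝ 1 μ := (ContinuousLinearMap.mul ℝ ℝ).holderL μ 2 2 1
    (indicatorConstLp 2 MeasurableSet.univ (measure_ne_top μ _) (1 : ℝ)) with hJ
  have hJind (A : Set S) (hA : MeasurableSet A) :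
      J (indicatorConstLp 2 hA (measure_ne_top μ _) (1 : ℝ))
        = indicatorConstLp 1 hA (measure_ne_top μ _) (1 : ℝ) := by
    apply Lp.ext
    have h1 := (ContinuousLinearMap.mul ℝ ℝ).coeFn_holder (r := 1) (μ := μ)
      (indicatorConstLp 2 MeasurableSet.univ (measure_ne_top μ _) (1 : ℝ))
      (indicatorConstLp 2 hA (measure_ne_top μ _) (1 : ℝ))
    filter_upwards [h1, indicatorConstLp_coeFn (p := 2) (hs := MeasurableSet.univ)
        (hμs := measure_ne_top μ _) (c := (1 : ℝ)),
      indicatorConstLp_coeFn (p := 2) (hs := hA) (hμs := measure_ne_top μ _) (c := (1 : ℝ)),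
      indicatorConstLp_coeFn (p := 1) (hs := hA) (hμs := measure_ne_top μ _) (c := (1 : ℝ))]
      with x h1 h2 h3 h4
    refine Eq.trans h1 ?_
    rw [h2, h3, h4]
    simp
  set w : Lp ℝ 2 μ := (InnerProductSpace.toDual ℝ _).symm (φ.comp J) with hw
  have hwint : Integrable w μ := (Lp.memLp w).integrable (by norm_num)
  have hset (A : Set S) (hA : MeasurableSet A) :
      ∫ x in A, w x ∂μ = φ (indicatorConstLp 1 hA (measure_ne_top μ _) (1 : ℝ)) := by
    rw [← L2.inner_indicatorConstLp_one (𝕜 := ℝ) hA (measure_ne_top μ _) w, real_inner_comm, hw,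
      InnerProductSpace.toDual_symm_apply, ContinuousLinearMap.comp_apply, hJind]
  have hw0 : 0 ≤ᵐ[μ] w := by
    refine ae_nonneg_of_forall_setIntegral_nonneg hwint fun A hA _ => ?_
    rw [hset A hA]
    refine hpos _ ?_
    filter_upwards [indicatorConstLp_coeFn (p := 1) (hs := hA) (hμs := measure_ne_top μ _)
      (c := (1 : ℝ))] with x hx
    rw [hx]
    exact Set.indicator_nonneg (fun _ _ => zero_le_one) x
  have hwM : w ≤ᵐ[μ] fun _ => ‖φ‖ := by
    refine ae_le_of_forall_setIntegral_le hwint (integrable_const _) fun A hA _ => ?_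
    rw [hset A hA]
    refine (le_abs_self _).trans ((φ.le_opNorm _).trans ?_)
    rw [norm_indicatorConstLp one_ne_zero ENNReal.one_ne_top]
    simp [mul_comm]
  set z : S → ℝ := fun s => max 0 (min (w s) ‖φ‖) with hz
  have hzw : z =ᵐ[μ] w := by
    filter_upwards [hw0, hwM] with s h0 hM
    simp only [Pi.zero_apply] at h0
    simp [hz, h0, hM]
  have hzm : Measurable z := by
    have := (Lp.stronglyMeasurable w).measurable
    fun_prop
  have hz0 : ∀ s, 0 ≤ z s := fun s => le_max_left _ _
  have hzM : ∀ s, z s ≤ ‖φ‖ := fun s => max_le (norm_nonneg _) (min_le_right _ _)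
  have hzint {f : S → ℝ} (hf : Integrable f μ) : Integrable (fun s => z s * f s) μ :=
    hf.bdd_mul (c := ‖φ‖) hzm.aestronglyMeasurable
      (ae_of_all _ fun s => by rw [Real.norm_of_nonneg (hz0 s)]; exact hzM s)
  refine ⟨z, ‖φ‖, hzm, hz0, hzM, ?_⟩
  have hcont : Continuous fun f : Lp ℝ 1 μ => ∫ s, z s * f s ∂μ := by
    have hmem : MemLp z ⊤ μ := memLp_top_of_bound hzm.aestronglyMeasurable ‖φ‖
      (ae_of_all _ fun s => by rw [Real.norm_of_nonneg (hz0 s)]; exact hzM s)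
    refine ((ContinuousLinearMap.mul ℝ ℝ).lpPairing μ ⊤ 1 hmem.toLp).continuous.congr fun f => ?_
    rw [ContinuousLinearMap.lpPairing_eq_integral]
    refine integral_congr_ae ?_
    filter_upwards [hmem.coeFn_toLp] with s hs
    simp [hs]
  refine Lp.induction ENNReal.one_ne_top _ ?_ ?_ ?_
  · intro c A hA hμA
    have : ((Lp.simpleFunc.indicatorConst 1 hA hμA.ne c : Lp.simpleFunc ℝ 1 μ) : Lp ℝ 1 μ)
        = c • indicatorConstLp 1 hA (measure_ne_top μ _) (1 : ℝ) := by
      rw [Lp.simpleFunc.coe_indicatorConst]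
      apply Lp.ext
      filter_upwards [indicatorConstLp_coeFn (p := 1) (hs := hA) (hμs := measure_ne_top μ _)
        (c := c), Lp.coeFn_smul c (indicatorConstLp 1 hA (measure_ne_top μ _) (1 : ℝ)),
        indicatorConstLp_coeFn (p := 1) (hs := hA) (hμs := measure_ne_top μ _) (c := (1 : ℝ))]
        with x h1 h2 h3
      rw [h1, h2, Pi.smul_apply, h3]
      by_cases hx : x ∈ A <;> simp [hx]
    rw [this, map_smul, ← hset A hA, smul_eq_mul, ← integral_const_mul, ← integral_indicator hA]
    refine integral_congr_ae ?_
    filter_upwards [hzw, Lp.coeFn_smul c (indicatorConstLp 1 hA (measure_ne_top μ _) (1 : ℝ)),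
        indicatorConstLp_coeFn (p := 1) (hs := hA) (hμs := measure_ne_top μ _) (c := (1 : ℝ))]
        with x h1 h2 h3
    rw [h2, Pi.smul_apply, h3, h1]
    by_cases hx : x ∈ A <;> simp [hx, mul_comm]
  · intro f g hf hg _ h1 h2
    rw [map_add, h1, h2, ← integral_add (hzint (L1.integrable_coeFn _))
      (hzint (L1.integrable_coeFn _))]
    refine integral_congr_ae ?_
    filter_upwards [Lp.coeFn_add hf.toLp hg.toLp] with x hx
    rw [hx, Pi.add_apply, mul_add]
  · exact isClosed_eq φ.continuous hcont

/-- A closed convex cone in `L⁰` containing the nonpositive functions and meeting the nonnegative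
functions only in `0` can be separated from the indicator of any non-null set by a bounded
nonnegative density. -/
theorem exists_density_separating_indicator {S : Type*} [MeasurableSpace S] (μ : Measure S)
    [IsFiniteMeasure μ] (C : Set (S → ℝ))
    (hadd : ∀ f ∈ C, ∀ g ∈ C, f + g ∈ C) (hsmul : ∀ f ∈ C, ∀ c : ℝ, 0 ≤ c → c • f ∈ C)
    (hneg : ∀ f : S → ℝ, Measurable f → f ≤ᵐ[μ] 0 → f ∈ C)
    (hclosed : ∀ (f : ℕ → S → ℝ) (g : S → ℝ), (∀ n, f n ∈ C) → Measurable g →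
      (∀ᵐ s ∂μ, Tendsto (fun n => f n s) atTop (𝓝 (g s))) → g ∈ C)
    (hpos : ∀ f ∈ C, 0 ≤ᵐ[μ] f → f =ᵐ[μ] 0)
    {A : Set S} (hA : MeasurableSet A) (hμA : μ A ≠ 0) :
    ∃ z : S → ℝ, Measurable z ∧ (∀ s, 0 ≤ z s) ∧ (∀ s, z s ≤ 1) ∧
      (∀ f ∈ C, Integrable f μ → ∫ s, z s * f s ∂μ ≤ 0) ∧ μ (A ∩ {s | 0 < z s}) ≠ 0 := by
  have hcongr {f g : S → ℝ} (hf : f ∈ C) (hg : Measurable g) (hfg : f =ᵐ[μ] g) : g ∈ C := by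
    refine hclosed (fun _ => f) g (fun _ => hf) hg ?_
    filter_upwards [hfg] with s hs
    rw [hs]
    exact tendsto_const_nhds
  have hmeas (f : Lp ℝ 1 μ) : Measurable f := (Lp.stronglyMeasurable f).measurable
  set C' : Set (Lp ℝ 1 μ) := {f | (f : S → ℝ) ∈ C} with hC'
  have hconv : Convex ℝ C' := by
    intro f hf g hg a b ha hb _
    refine hcongr (hadd _ (hsmul _ hf a ha) _ (hsmul _ hg b hb)) (hmeas _) ?_
    filter_upwards [Lp.coeFn_add (a • f) (b • g), Lp.coeFn_smul a f, Lp.coeFn_smul b g]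
      with s h1 h2 h3
    rw [h1, Pi.add_apply, Pi.add_apply, h2, h3]
  have hcl : IsClosed C' := by
    refine IsSeqClosed.isClosed fun f g hf hfg => ?_
    obtain ⟨ns, _, hns⟩ := (tendstoInMeasure_of_tendsto_Lp hfg).exists_seq_tendsto_ae
    exact hclosed (fun n => f (ns n)) g (fun n => hf _) (hmeas g) hns
  have hsmul' {f : Lp ℝ 1 μ} (hf : f ∈ C') {c : ℝ} (hc : 0 ≤ c) : c • f ∈ C' :=
    hcongr (hsmul _ hf c hc) (hmeas _) (Lp.coeFn_smul c f).symm
  set e : Lp ℝ 1 μ := indicatorConstLp 1 hA (measure_ne_top μ _) (1 : ℝ) with he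
  have heA : e =ᵐ[μ] A.indicator fun _ => (1 : ℝ) := indicatorConstLp_coeFn
  have heC : e ∉ C' := by
    intro hmem
    have h0 : 0 ≤ᵐ[μ] e := by
      filter_upwards [heA] with s hs
      rw [hs]
      exact Set.indicator_nonneg (fun _ _ => zero_le_one) s
    apply hμA
    have h1 := heA.symm.trans (hpos _ hmem h0)
    rw [measure_eq_zero_iff_ae_notMem]
    filter_upwards [h1] with s hs hsA
    simp [hsA] at hs
  obtain ⟨φ, u, hφC, hφe⟩ := geometric_hahn_banach_closed_point hconv hcl heC
  have h0C : (0 : Lp ℝ 1 μ) ∈ C' := hneg _ (hmeas _) (Lp.coeFn_zero ℝ 1 μ).le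
  have hu : 0 < u := by simpa using hφC 0 h0C
  have hφC' (f : Lp ℝ 1 μ) (hf : f ∈ C') : φ f ≤ 0 := by
    by_contra! hlt
    have h := hφC _ (hsmul' hf (c := u / φ f) (by positivity))
    rw [map_smul, smul_eq_mul, div_mul_cancel₀ _ hlt.ne'] at h
    exact lt_irrefl _ h
  have hφpos (f : Lp ℝ 1 μ) (hf : 0 ≤ᵐ[μ] f) : 0 ≤ φ f := by
    have h : -f ∈ C' := by
      refine hneg _ (hmeas _) ?_
      filter_upwards [hf, Lp.coeFn_neg f] with s h1 h2
      rw [h2]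
      simpa using h1
    simpa using hφC' _ h
  obtain ⟨z, M, hzm, hz0, hzM, hφz⟩ := exists_density_of_nonneg_functional μ φ hφpos
  have hM : 0 < max M 1 := lt_max_of_lt_right one_pos
  refine ⟨fun s => (max M 1)⁻¹ * z s, hzm.const_mul _,
    fun s => mul_nonneg (inv_nonneg.2 hM.le) (hz0 s), fun s => ?_, fun f hf hfi => ?_, fun hz => ?_⟩
  · rw [inv_mul_le_iff₀ hM, mul_one]
    exact (hzM s).trans (le_max_left _ _)
  · have hf' : hfi.toL1 f ∈ C' := hcongr hf (hmeas _) (Integrable.coeFn_toL1 hfi).symm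
    have h := hφC' _ hf'
    rw [hφz] at h
    simp_rw [mul_assoc]
    rw [integral_const_mul]
    refine mul_nonpos_of_nonneg_of_nonpos (inv_nonneg.2 hM.le) (le_of_eq_of_le ?_ h)
    refine integral_congr_ae ?_
    filter_upwards [Integrable.coeFn_toL1 hfi] with s hs
    rw [hs]
  · have h : φ e = 0 := by
      rw [hφz]
      refine integral_eq_zero_of_ae ?_
      filter_upwards [heA, measure_eq_zero_iff_ae_notMem.1 hz] with s h1 h2
      by_cases hs : s ∈ A
      · have h3 : z s ≤ 0 := by
          by_contra! hlt
          exact h2 ⟨hs, mul_pos (inv_pos.2 hM) hlt⟩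
        simp [le_antisymm h3 (hz0 s)]
      · simp [h1, hs]
    linarith

/-- **Kreps–Yan theorem** for closed convex cones in `L⁰` of a finite measure. -/
theorem exists_pos_density_of_closed_cone {S : Type*} [MeasurableSpace S] (μ : Measure S)
    [IsFiniteMeasure μ] (C : Set (S → ℝ))
    (hadd : ∀ f ∈ C, ∀ g ∈ C, f + g ∈ C) (hsmul : ∀ f ∈ C, ∀ c : ℝ, 0 ≤ c → c • f ∈ C)
    (hneg : ∀ f : S → ℝ, Measurable f → f ≤ᵐ[μ] 0 → f ∈ C)
    (hclosed : ∀ (f : ℕ → S → ℝ) (g : S → ℝ), (∀ n, f n ∈ C) → Measurable g →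
      (∀ᵐ s ∂μ, Tendsto (fun n => f n s) atTop (𝓝 (g s))) → g ∈ C)
    (hpos : ∀ f ∈ C, 0 ≤ᵐ[μ] f → f =ᵐ[μ] 0) :
    ∃ z : S → ℝ, Measurable z ∧ (∀ s, 0 < z s) ∧ (∀ s, z s ≤ 1) ∧
      ∀ f ∈ C, Integrable f μ → ∫ s, z s * f s ∂μ ≤ 0 := by
  set G : Set (S → ℝ) := {g | Measurable g ∧ (∀ s, 0 ≤ g s) ∧ (∀ s, g s ≤ 1) ∧
    ∀ f ∈ C, Integrable f μ → ∫ s, g s * f s ∂μ ≤ 0} with hG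
  have hseries (g : ℕ → S → ℝ) (hg : ∀ n, g n ∈ G) :
      ∃ h ∈ G, ∀ n s, 0 < g n s → 0 < h s := by
    have hsum (s : S) : Summable fun n => (1 / 2 : ℝ) ^ (n + 1) * g n s := by
      refine Summable.of_nonneg_of_le (fun n => mul_nonneg (by positivity) ((hg n).2.1 s))
        (fun n => mul_le_of_le_one_right (by positivity) ((hg n).2.2.1 s)) ?_
      exact (summable_nat_add_iff 1).2 summable_geometric_two
    have hgeom : HasSum (fun n : ℕ => (1 / 2 : ℝ) ^ (n + 1)) 1 := by
      simpa [pow_succ] using hasSum_geometric_two.mul_right (1 / 2 : ℝ)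
    refine ⟨fun s => ∑' n, (1 / 2 : ℝ) ^ (n + 1) * g n s,
      ⟨?_, fun s => ?_, fun s => ?_, fun f hf hfi => ?_⟩, fun n s hn => ?_⟩
    · exact Measurable.tsum fun n => ((hg n).1.const_mul _)
    · exact tsum_nonneg fun n => mul_nonneg (by positivity) ((hg n).2.1 s)
    · refine (Summable.tsum_le_tsum (fun n =>
        mul_le_of_le_one_right (by positivity) ((hg n).2.2.1 s)) (hsum s) hgeom.summable).trans ?_
      exact hgeom.tsum_eq.le
    · have hint (n : ℕ) : Integrable (fun s => g n s * f s) μ :=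
        hfi.bdd_mul (c := 1) (hg n).1.aestronglyMeasurable
          (ae_of_all _ fun s => by rw [Real.norm_of_nonneg ((hg n).2.1 s)]; exact (hg n).2.2.1 s)
      have hint' (n : ℕ) : Integrable (fun s => (1 / 2 : ℝ) ^ (n + 1) * (g n s * f s)) μ :=
        (hint n).const_mul _
      have hs : Summable fun n => ∫ s, ‖(1 / 2 : ℝ) ^ (n + 1) * (g n s * f s)‖ ∂μ := by
        refine Summable.of_nonneg_of_le (fun n => integral_nonneg fun s => norm_nonneg _)
          (fun n => ?_) (hgeom.summable.mul_right (∫ s, ‖f s‖ ∂μ))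
        rw [← integral_const_mul]
        refine integral_mono (hint' n).norm (hfi.norm.const_mul _) fun s => ?_
        simp only [norm_mul]
        rw [Real.norm_of_nonneg (by positivity : (0 : ℝ) ≤ (1 / 2) ^ (n + 1)),
          Real.norm_of_nonneg ((hg n).2.1 s)]
        have := (hg n).2.2.1 s
        gcongr
        exact mul_le_of_le_one_left (norm_nonneg _) this
      have h := hasSum_integral_of_summable_integral_norm hint' hs
      have heq : (fun s => (∑' n, (1 / 2 : ℝ) ^ (n + 1) * g n s) * f s)
          = fun s => ∑' n, (1 / 2 : ℝ) ^ (n + 1) * (g n s * f s) := by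
        ext s
        rw [← tsum_mul_right]
        simp_rw [mul_assoc]
      rw [heq]
      refine hasSum_le (fun n => ?_) h (hasSum_zero (L := SummationFilter.unconditional ℕ))
      rw [integral_const_mul]
      exact mul_nonpos_of_nonneg_of_nonpos (by positivity) ((hg n).2.2.2 f hf hfi)
    · exact (hsum s).tsum_pos (fun n => mul_nonneg (by positivity) ((hg n).2.1 s)) n
        (mul_pos (by positivity) hn)
  set V : Set ENNReal := (fun g : S → ℝ => μ {s | 0 < g s}) '' G with hV
  have h0G : (fun _ => 0) ∈ G := ⟨measurable_const, fun _ => le_rfl, fun _ => zero_le_one, by simp⟩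
  obtain ⟨u, -, hu, huV⟩ := exists_seq_tendsto_sSup (S := V) ⟨_, _, h0G, rfl⟩ (OrderTop.bddAbove _)
  choose g hgG hgu using huV
  obtain ⟨h, hhG, hh⟩ := hseries g hgG
  have hmax : sSup V ≤ μ {s | 0 < h s} := by
    refine le_of_tendsto hu (Eventually.of_forall fun n => ?_)
    rw [← hgu n]
    exact measure_mono fun s hs => hh n s hs
  have hae : μ {s | h s ≤ 0} = 0 := by
    by_contra hne
    obtain ⟨z, hzm, hz0, hz1, hzC, hzA⟩ := exists_density_separating_indicator μ C hadd hsmul hneg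
      hclosed hpos (measurableSet_le hhG.1 measurable_const) hne
    obtain ⟨k, hkG, hk⟩ := hseries (fun n => if n = 0 then h else z) (fun n => by
      by_cases hn : n = 0
      · simpa [hn] using hhG
      · simp only [hn, if_false]
        exact ⟨hzm, hz0, hz1, hzC⟩)
    have hsub : {s | 0 < h s} ∪ ({s | h s ≤ 0} ∩ {s | 0 < z s}) ⊆ {s | 0 < k s} := by
      rintro s (hs | hs)
      · exact hk 0 s (by simpa using hs)
      · exact hk 1 s (by simpa using hs.2)
    have hkV : μ {s | 0 < k s} ∈ V := ⟨k, hkG, rfl⟩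
    have hle := (measure_mono (μ := μ) hsub).trans ((le_sSup hkV).trans hmax)
    rw [measure_union _ ((measurableSet_le hhG.1 measurable_const).inter
      (measurableSet_lt measurable_const hzm))] at hle
    · exact hzA (by simpa using ENNReal.le_sub_of_add_le_left (measure_ne_top μ _) hle)
    · rw [Set.disjoint_left]
      rintro s hs ⟨hs', -⟩
      exact absurd (show 0 < h s from hs) (not_lt.2 hs')
  refine ⟨fun s => if h s ≤ 0 then 1 else h s,
    Measurable.ite (measurableSet_le hhG.1 measurable_const) measurable_const hhG.1,
    fun s => ?_, fun s => ?_, fun f hf hfi => ?_⟩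
  · beta_reduce
    split_ifs with hs
    · exact one_pos
    · exact not_le.1 hs
  · beta_reduce
    split_ifs with hs
    · exact le_rfl
    · exact hhG.2.2.1 s
  · refine le_of_eq_of_le (integral_congr_ae ?_) (hhG.2.2.2 f hf hfi)
    filter_upwards [measure_eq_zero_iff_ae_notMem.1 hae] with s hs
    rw [if_neg hs]

/-- `D` becomes integrable and centered given `m` after multiplication by suitably small
`m`-measurable factors. -/
def IsLocallyCentered {Ω : Type*} {m0 : MeasurableSpace Ω} (Q : Measure Ω) (m : MeasurableSpace Ω)
    (D : Ω → ℝ) : Prop :=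
  ∃ h : Ω → ℝ, Measurable[m] h ∧ (∀ ω, 1 ≤ h ω) ∧
    ∀ φ : Ω → ℝ, Measurable[m] φ → (∀ ω, |φ ω| * h ω ≤ 1) →
      Integrable (fun ω => φ ω * D ω) Q ∧ Q[fun ω => φ ω * D ω | m] =ᵐ[Q] 0

/-- A finite sum of predictable multiples of martingale increments is locally centered. -/
theorem isLocallyCentered_sum {Ω ι : Type*} {m0 : MeasurableSpace Ω} (Q : Measure Ω)
    [IsFiniteMeasure Q] {m : MeasurableSpace Ω} (hm : m ≤ m0) (A : Finset ι) (H Δ : ι → Ω → ℝ)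
    (hH : ∀ j ∈ A, Measurable[m] (H j)) (hΔ : ∀ j ∈ A, Integrable (Δ j) Q)
    (hΔ0 : ∀ j ∈ A, Q[Δ j | m] =ᵐ[Q] 0) :
    IsLocallyCentered Q m (fun ω => ∑ j ∈ A, H j ω * Δ j ω) := by
  refine ⟨fun ω => 1 + ∑ j ∈ A, |H j ω|, ?_, fun ω => ?_, fun φ hφ hb => ?_⟩
  · exact measurable_const.add (Finset.measurable_fun_sum _ fun j hj => (hH j hj).abs)
  · exact le_add_of_nonneg_right (Finset.sum_nonneg fun j _ => abs_nonneg _)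
  have hbd (j : ι) (hj : j ∈ A) (ω : Ω) : ‖φ ω * H j ω‖ ≤ 1 := by
    rw [Real.norm_eq_abs, abs_mul]
    refine le_trans ?_ (hb ω)
    gcongr
    exact (Finset.single_le_sum (f := fun j => |H j ω|) (fun j _ => abs_nonneg _) hj).trans
      (le_add_of_nonneg_left zero_le_one)
  have hmeas (j : ι) (hj : j ∈ A) : StronglyMeasurable[m] (fun ω => φ ω * H j ω) :=
    (hφ.mul (hH j hj)).stronglyMeasurable
  have hint (j : ι) (hj : j ∈ A) : Integrable (fun ω => φ ω * H j ω * Δ j ω) Q :=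
    (hΔ j hj).bdd_mul (c := 1) ((hmeas j hj).mono hm).aestronglyMeasurable (ae_of_all _ (hbd j hj))
  have heq : (fun ω => φ ω * ∑ j ∈ A, H j ω * Δ j ω)
      = ∑ j ∈ A, fun ω => φ ω * H j ω * Δ j ω := by
    ext ω
    simp [Finset.sum_apply, Finset.mul_sum, mul_assoc]
  rw [heq]
  refine ⟨integrable_finsetSum' _ hint, ?_⟩
  refine (condExp_finsetSum hint m).trans ?_
  have h0 (j : ι) (hj : j ∈ A) : Q[fun ω => φ ω * H j ω * Δ j ω | m] =ᵐ[Q] 0 := by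
    refine (condExp_mul_of_stronglyMeasurable_left (hmeas j hj) (hint j hj) (hΔ j hj)).trans ?_
    filter_upwards [hΔ0 j hj] with ω hω
    simp [hω]
  have h0' : ∀ᵐ ω ∂Q, ∀ j ∈ A, (Q[fun ω => φ ω * H j ω * Δ j ω | m]) ω = 0 :=
    (Finset.eventually_all A).2 h0
  filter_upwards [h0'] with ω hω
  rw [Finset.sum_apply, Finset.sum_eq_zero hω]
  rfl

/-- If `V + D` is bounded below by an integrable function and `D` is locally centered, then `V`
is bounded below by the conditional expectation of that function. -/
theorem IsLocallyCentered.neg_condExp_le {Ω : Type*} {m0 : MeasurableSpace Ω} {Q : Measure Ω}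
    [IsFiniteMeasure Q] {m : MeasurableSpace Ω} (hm : m ≤ m0) {D V W : Ω → ℝ}
    (hD : IsLocallyCentered Q m D) (hV : Measurable[m] V) (hW : Integrable W Q)
    (hVD : ∀ᵐ ω ∂Q, -W ω ≤ V ω + D ω) : ∀ᵐ ω ∂Q, -(Q[W | m]) ω ≤ V ω := by
  obtain ⟨h, hhm, hh1, hφ⟩ := hD
  set φ : Ω → ℝ := fun ω => (h ω * (1 + |V ω|))⁻¹ with hφdef
  have hφm : Measurable[m] φ := (hhm.mul (measurable_const.add hV.abs)).inv
  have hV1 (ω : Ω) : 1 ≤ 1 + |V ω| := le_add_of_nonneg_right (abs_nonneg _)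
  have hφpos (ω : Ω) : 0 < φ ω :=
    inv_pos.2 (mul_pos (one_pos.trans_le (hh1 ω)) (one_pos.trans_le (hV1 ω)))
  have hφ1 (ω : Ω) : φ ω ≤ 1 :=
    inv_le_one_of_one_le₀ (one_le_mul_of_one_le_of_one_le (hh1 ω) (hV1 ω))
  have hφh (ω : Ω) : |φ ω| * h ω ≤ 1 := by
    have h0 : 0 < h ω := one_pos.trans_le (hh1 ω)
    rw [abs_of_pos (hφpos ω), hφdef]
    simp only [mul_inv]
    rw [mul_right_comm, inv_mul_cancel₀ h0.ne', one_mul]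
    exact inv_le_one_of_one_le₀ (hV1 ω)
  have hφV (ω : Ω) : |φ ω * V ω| ≤ 1 := by
    rw [abs_mul, abs_of_pos (hφpos ω)]
    simp only [hφdef]
    have h0 : 0 < h ω * (1 + |V ω|) :=
      mul_pos (one_pos.trans_le (hh1 ω)) (one_pos.trans_le (hV1 ω))
    rw [inv_mul_le_iff₀ h0]
    nlinarith [hh1 ω, hV1 ω, abs_nonneg (V ω)]
  obtain ⟨hDi, hD0⟩ := hφ φ hφm hφh
  have hVi : Integrable (fun ω => φ ω * V ω) Q :=
    Integrable.of_bound ((hφm.mul hV).mono hm le_rfl).aestronglyMeasurable 1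
      (ae_of_all _ hφV)
  have hWi : Integrable (fun ω => φ ω * W ω) Q :=
    hW.bdd_mul (c := 1) (hφm.mono hm le_rfl).aestronglyMeasurable
      (ae_of_all _ fun ω => by rw [Real.norm_of_nonneg (hφpos ω).le]; exact hφ1 ω)
  have hmono : Q[-fun ω => φ ω * W ω | m]
      ≤ᵐ[Q] Q[(fun ω => φ ω * V ω) + fun ω => φ ω * D ω | m] := by
    refine condExp_mono hWi.neg (hVi.add hDi) ?_
    filter_upwards [hVD] with ω hω
    simp only [Pi.neg_apply, Pi.add_apply]
    nlinarith [hφpos ω]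
  have hVc : Q[fun ω => φ ω * V ω | m] = fun ω => φ ω * V ω :=
    condExp_of_stronglyMeasurable hm (hφm.mul hV).stronglyMeasurable hVi
  filter_upwards [hmono, condExp_neg (μ := Q) (fun ω => φ ω * W ω) m, condExp_add hVi hDi m, hD0,
    condExp_mul_of_stronglyMeasurable_left hφm.stronglyMeasurable hWi hW] with ω h1 h2 h3 h4 h5
  rw [h2, h3, Pi.neg_apply, Pi.add_apply, h4, hVc] at h1
  have h5' : (Q[fun ω => φ ω * W ω | m]) ω = φ ω * (Q[W | m]) ω := h5
  rw [h5', Pi.zero_apply, add_zero, ← mul_neg] at h1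
  exact le_of_mul_le_mul_left h1 (hφpos ω)

/-- A locally centered function bounded below by an integrable function is integrable with
nonpositive mean. -/
theorem IsLocallyCentered.integrable_of_le {Ω : Type*} {m0 : MeasurableSpace Ω} {Q : Measure Ω}
    [IsFiniteMeasure Q] {m : MeasurableSpace Ω} (hm : m ≤ m0) {D U : Ω → ℝ}
    (hD : IsLocallyCentered Q m D) (hDm : Measurable[m0] D) (hU : Integrable U Q)
    (hUD : ∀ᵐ ω ∂Q, -U ω ≤ D ω) : Integrable D Q ∧ ∫ ω, D ω ∂Q ≤ 0 := by
  obtain ⟨h, hhm, hh1, hφ⟩ := hD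
  have hh0 (ω : Ω) : 0 < h ω := one_pos.trans_le (hh1 ω)
  have hnh (n : ℕ) (ω : Ω) : 0 < (n : ℝ) + h ω := add_pos_of_nonneg_of_pos n.cast_nonneg (hh0 ω)
  set φ : ℕ → Ω → ℝ := fun n ω => n * ((n : ℝ) + h ω)⁻¹ with hφdef
  have hφ0 (n : ℕ) (ω : Ω) : 0 ≤ φ n ω := mul_nonneg n.cast_nonneg (inv_pos.2 (hnh n ω)).le
  have hφ1 (n : ℕ) (ω : Ω) : φ n ω ≤ 1 := by
    simp only [hφdef]
    rw [← div_eq_mul_inv, div_le_one (hnh n ω)]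
    linarith [hh0 ω]
  have hφlim (ω : Ω) : Tendsto (fun n => φ n ω) atTop (𝓝 1) := by
    have h1 : Tendsto (fun n : ℕ => 1 - h ω * ((n : ℝ) + h ω)⁻¹) atTop (𝓝 (1 - h ω * 0)) := by
      refine tendsto_const_nhds.sub (tendsto_const_nhds.mul ?_)
      exact tendsto_inv_atTop_zero.comp
        (tendsto_atTop_add_const_right _ _ tendsto_natCast_atTop_atTop)
    rw [mul_zero, sub_zero] at h1
    refine h1.congr fun n => ?_
    simp only [hφdef]
    field_simp [(hnh n ω).ne']
    ring
  have key (n : ℕ) : Integrable (fun ω => φ n ω * D ω) Q ∧ ∫ ω, φ n ω * D ω ∂Q = 0 := by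
    obtain ⟨hi, h0⟩ := hφ (fun ω => ((n : ℝ) + h ω)⁻¹) (measurable_const.add hhm).inv fun ω => by
      rw [abs_of_pos (inv_pos.2 (hnh n ω)), inv_mul_le_iff₀ (hnh n ω), mul_one]
      exact le_add_of_nonneg_left n.cast_nonneg
    simp only [hφdef, mul_assoc]
    refine ⟨hi.const_mul _, ?_⟩
    rw [integral_const_mul, ← integral_condExp hm, integral_congr_ae h0]
    simp
  have hneg : ∫⁻ ω, ENNReal.ofReal (-D ω) ∂Q < ⊤ := by
    refine lt_of_le_of_lt (lintegral_mono_ae ?_) hU.lintegral_lt_top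
    filter_upwards [hUD] with ω hω
    exact ENNReal.ofReal_le_ofReal (by linarith)
  have hstep (n : ℕ) : ∫⁻ ω, ENNReal.ofReal (φ n ω * D ω) ∂Q
      ≤ ∫⁻ ω, ENNReal.ofReal (-D ω) ∂Q := by
    have h1 := integral_eq_lintegral_pos_part_sub_lintegral_neg_part (key n).1
    have hfin : ∫⁻ ω, ENNReal.ofReal (-(φ n ω * D ω)) ∂Q ≠ ⊤ := (key n).1.neg.lintegral_lt_top.ne
    rw [(key n).2, eq_comm, sub_eq_zero, ENNReal.toReal_eq_toReal_iff'
      (key n).1.lintegral_lt_top.ne hfin] at h1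
    rw [h1]
    refine lintegral_mono fun ω => ?_
    rw [← mul_neg]
    rcases le_total 0 (-D ω) with hd | hd
    · exact ENNReal.ofReal_le_ofReal (mul_le_of_le_one_left hd (hφ1 n ω))
    · rw [ENNReal.ofReal_of_nonpos (mul_nonpos_of_nonneg_of_nonpos (hφ0 n ω) hd)]
      exact zero_le
  have hfatou : ∫⁻ ω, ENNReal.ofReal (D ω) ∂Q ≤ ∫⁻ ω, ENNReal.ofReal (-D ω) ∂Q := by
    have hlim (ω : Ω) : Tendsto (fun n => ENNReal.ofReal (φ n ω * D ω)) atTop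
        (𝓝 (ENNReal.ofReal (D ω))) := by
      have := ENNReal.tendsto_ofReal ((hφlim ω).mul_const (D ω))
      rwa [one_mul] at this
    calc ∫⁻ ω, ENNReal.ofReal (D ω) ∂Q
        = ∫⁻ ω, liminf (fun n => ENNReal.ofReal (φ n ω * D ω)) atTop ∂Q :=
          lintegral_congr fun ω => (hlim ω).liminf_eq.symm
      _ ≤ liminf (fun n => ∫⁻ ω, ENNReal.ofReal (φ n ω * D ω) ∂Q) atTop :=
          lintegral_liminf_le' fun n => (key n).1.aemeasurable.ennreal_ofReal
      _ ≤ _ := liminf_le_of_le (by isBoundedDefault) fun b hb => by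
          obtain ⟨n, hn⟩ := hb.exists
          exact hn.trans (hstep n)
  have hDi : Integrable D Q := by
    refine ⟨hDm.aestronglyMeasurable, ?_⟩
    rw [hasFiniteIntegral_iff_norm]
    have hsplit (ω : Ω) : ENNReal.ofReal ‖D ω‖
        ≤ ENNReal.ofReal (D ω) + ENNReal.ofReal (-D ω) := by
      rcases le_total 0 (D ω) with hd | hd
      · rw [Real.norm_of_nonneg hd]
        exact le_self_add
      · rw [Real.norm_of_nonpos hd]
        exact le_add_self
    refine (lintegral_mono hsplit).trans_lt ?_
    rw [lintegral_add_left hDm.ennreal_ofReal]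
    exact ENNReal.add_lt_top.2 ⟨hfatou.trans_lt hneg, hneg⟩
  refine ⟨hDi, ?_⟩
  rw [integral_eq_lintegral_pos_part_sub_lintegral_neg_part hDi, sub_nonpos]
  exact ENNReal.toReal_mono hneg.ne hfatou

/-- A partial sum of locally centered increments that is bounded below by an integrable function is
integrable with nonpositive mean. -/
theorem integrable_sum_of_isLocallyCentered {Ω : Type*} {m0 : MeasurableSpace Ω} {Q : Measure Ω}
    [IsFiniteMeasure Q] {F : ℕ → MeasurableSpace Ω} (hF : Monotone F) (hm : ∀ t, F t ≤ m0)
    {D : ℕ → Ω → ℝ} (T : ℕ) (hDm : ∀ s < T, Measurable[F (s + 1)] (D s))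
    (hD : ∀ s < T, IsLocallyCentered Q (F s) (D s)) {W : Ω → ℝ} (hW : Integrable W Q)
    (hle : ∀ᵐ ω ∂Q, -W ω ≤ ∑ s ∈ Finset.range T, D s ω) :
    Integrable (fun ω => ∑ s ∈ Finset.range T, D s ω) Q ∧
      ∫ ω, ∑ s ∈ Finset.range T, D s ω ∂Q ≤ 0 := by
  induction T generalizing W with
  | zero => simp
  | succ T ih =>
    have hVm : Measurable[F T] fun ω => ∑ s ∈ Finset.range T, D s ω :=
      Finset.measurable_fun_sum _ fun s hs =>
        (hDm s ((Finset.mem_range.1 hs).trans T.lt_succ_self)).mono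
        (hF (Finset.mem_range.1 hs)) le_rfl
    simp_rw [Finset.sum_range_succ] at hle ⊢
    have hDT := hD T T.lt_succ_self
    obtain ⟨hVi, hV0⟩ := ih (fun s hs => hDm s (hs.trans T.lt_succ_self))
      (fun s hs => hD s (hs.trans T.lt_succ_self)) integrable_condExp
      (hDT.neg_condExp_le (hm T) hVm hW hle)
    obtain ⟨hDi, hD0⟩ := hDT.integrable_of_le (hm T)
      ((hDm T T.lt_succ_self).mono (hm _) le_rfl) (hW.add hVi) (by
        filter_upwards [hle] with ω hω
        simp only [Pi.add_apply]
        linarith)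
    refine ⟨hVi.add hDi, ?_⟩
    rw [integral_add hVi hDi]
    linarith

/-- **Kreps–Yan theorem** for closed convex cones of tuples of random variables, each component
living on its own finite measure space. -/
theorem exists_pos_densities_of_closed_cone {ι : Type*} [Fintype ι] {β : ι → Type*}
    {mβ : ∀ i, MeasurableSpace (β i)} (ν : ∀ i, Measure (β i)) [∀ i, IsFiniteMeasure (ν i)]
    (C : Set (∀ i, β i → ℝ))
    (hadd : ∀ f ∈ C, ∀ g ∈ C, f + g ∈ C) (hsmul : ∀ f ∈ C, ∀ c : ℝ, 0 ≤ c → c • f ∈ C)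
    (hneg : ∀ f : ∀ i, β i → ℝ, (∀ i, Measurable (f i)) → (∀ i, f i ≤ᵐ[ν i] 0) → f ∈ C)
    (hclosed : ∀ (f : ℕ → ∀ i, β i → ℝ) (g : ∀ i, β i → ℝ), (∀ n, f n ∈ C) →
      (∀ i, Measurable (g i)) →
      (∀ i, ∀ᵐ s ∂ν i, Tendsto (fun n => f n i s) atTop (𝓝 (g i s))) → g ∈ C)
    (hpos : ∀ f ∈ C, (∀ i, 0 ≤ᵐ[ν i] f i) → ∀ i, f i =ᵐ[ν i] 0) :
    ∃ z : ∀ i, β i → ℝ, (∀ i, Measurable (z i)) ∧ (∀ i s, 0 < z i s) ∧ (∀ i s, z i s ≤ 1) ∧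
      ∀ f ∈ C, (∀ i, Measurable (f i)) → (∀ i, Integrable (f i) (ν i)) →
        ∑ i, ∫ s, z i s * f i s ∂ν i ≤ 0 := by
  classical
  have hmk (i : ι) : Measurable (Sigma.mk i : β i → Sigma β) := fun E hE =>
    MeasurableSpace.measurableSet_iInf.1 hE i
  have hsigma {f : ∀ i, β i → ℝ} (hf : ∀ i, Measurable (f i)) :
      Measurable fun x : Sigma β => f x.1 x.2 := fun E hE =>
    MeasurableSpace.measurableSet_iInf.2 fun i => hf i hE
  set μ : Measure (Sigma β) := ∑ i, (ν i).map (Sigma.mk i) with hμ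
  have hae {p : Sigma β → Prop} (hp : ∀ᵐ x ∂μ, p x) (i : ι) : ∀ᵐ s ∂ν i, p ⟨i, s⟩ := by
    have hle : (ν i).map (Sigma.mk i) ≤ μ := by
      rw [hμ, ← Finset.add_sum_erase _ _ (Finset.mem_univ i)]
      exact Measure.le_add_right le_rfl
    exact ae_of_ae_map (hmk i).aemeasurable (ae_mono hle hp)
  obtain ⟨z, hzm, hz0, hz1, hzC⟩ := exists_pos_density_of_closed_cone μ
    {f | Measurable f ∧ (fun i s => f ⟨i, s⟩) ∈ C}
    (fun f hf g hg => ⟨hf.1.add hg.1, hadd _ hf.2 _ hg.2⟩)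
    (fun f hf c hc => ⟨hf.1.const_smul c, hsmul _ hf.2 c hc⟩)
    (fun f hf hf0 => ⟨hf, hneg _ (fun i => hf.comp (hmk i)) (hae hf0)⟩)
    (fun f g hf hg hfg =>
      ⟨hg, hclosed _ _ (fun n => (hf n).2) (fun i => hg.comp (hmk i)) (hae hfg)⟩)
    (fun f hf hf0 => by
      have h := hpos _ hf.2 (hae hf0)
      have hE : MeasurableSet {x | f x = 0} := hf.1 (measurableSet_singleton 0)
      change ∀ᵐ x ∂μ, f x = 0
      rw [ae_iff, hμ, Measure.finsetSum_apply]
      refine Finset.sum_eq_zero fun i _ => ?_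
      rw [← ae_iff, ae_map_iff (hmk i).aemeasurable hE]
      exact h i)
  refine ⟨fun i s => z ⟨i, s⟩, fun i => hzm.comp (hmk i), fun i s => hz0 _, fun i s => hz1 _,
    fun f hf hfm hfi => ?_⟩
  have hm := hsigma hfm
  have hi : Integrable (fun x : Sigma β => f x.1 x.2) μ := by
    rw [hμ, integrable_finsetSum_measure]
    intro i _
    rw [integrable_map_measure hm.aestronglyMeasurable (hmk i).aemeasurable]
    exact hfi i
  have h := hzC _ ⟨hm, hf⟩ hi
  have hzi : Integrable (fun x : Sigma β => z x * f x.1 x.2) μ :=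
    hi.bdd_mul (c := 1) hzm.aestronglyMeasurable
      (ae_of_all _ fun x => by rw [Real.norm_of_nonneg (hz0 x).le]; exact hz1 x)
  rw [hμ, integrable_finsetSum_measure] at hzi
  rw [hμ, integral_finsetSum_measure hzi] at h
  refine le_of_eq_of_le (Finset.sum_congr rfl fun i _ => ?_) h
  exact (integral_map (f := fun x : Sigma β => z x * f x.1 x.2) (hmk i).aemeasurable
    (hzm.mul hm).aestronglyMeasurable).symm

/-- Basic properties of the measure with a bounded positive density. -/
theorem withDensity_ofReal_properties {Ω : Type*} {m0 : MeasurableSpace Ω} (μ : Measure Ω)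
    [IsFiniteMeasure μ] {z : Ω → ℝ} {M : ℝ} (hz : Measurable z) (hz0 : ∀ ω, 0 < z ω)
    (hzM : ∀ ω, z ω ≤ M) {ν : Measure Ω} (hν : ν = μ.withDensity fun ω => ENNReal.ofReal (z ω)) :
    IsFiniteMeasure ν ∧ ν ≪ μ ∧ μ ≪ ν ∧
      (∀ f : Ω → ℝ, Integrable f ν ↔ Integrable (fun ω => z ω * f ω) μ) ∧
      (∀ f : Ω → ℝ, Integrable f μ → Integrable f ν) ∧
      ∀ f : Ω → ℝ, ∫ ω, f ω ∂ν = ∫ ω, z ω * f ω ∂μ := by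
  have hzi : Integrable z μ := Integrable.of_bound hz.aestronglyMeasurable M
    (ae_of_all _ fun ω => by rw [Real.norm_of_nonneg (hz0 ω).le]; exact hzM ω)
  have hiff (f : Ω → ℝ) : Integrable f ν ↔ Integrable (fun ω => z ω * f ω) μ := by
    rw [hν, integrable_withDensity_iff hz.ennreal_ofReal
      (ae_of_all _ fun ω => ENNReal.ofReal_lt_top)]
    simp_rw [ENNReal.toReal_ofReal (hz0 _).le, mul_comm]
  subst hν
  refine ⟨isFiniteMeasure_withDensity hzi.lintegral_lt_top.ne, withDensity_absolutelyContinuous _ _,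
    withDensity_absolutelyContinuous' hz.ennreal_ofReal.aemeasurable
      (ae_of_all _ fun ω => (ENNReal.ofReal_pos.2 (hz0 ω)).ne'), hiff, fun f hf => ?_, fun f => ?_⟩
  · rw [hiff]
    exact hf.bdd_mul (c := M) hz.aestronglyMeasurable
      (ae_of_all _ fun ω => by rw [Real.norm_of_nonneg (hz0 ω).le]; exact hzM ω)
  · rw [integral_withDensity_eq_integral_toReal_smul hz.ennreal_ofReal
      (ae_of_all _ fun ω => ENNReal.ofReal_lt_top)]
    simp_rw [ENNReal.toReal_ofReal (hz0 _).le, smul_eq_mul]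

/-- A finite measure can be replaced by an equivalent one making finitely many given functions
integrable, without losing any integrable function. -/
theorem exists_equiv_measure_integrable {Ω ι : Type*} {m0 : MeasurableSpace Ω} (μ : Measure Ω)
    [IsFiniteMeasure μ] (A : Finset ι) (X : ι → Ω → ℝ) (hX : ∀ j ∈ A, Measurable (X j)) :
    ∃ ν : Measure Ω, IsFiniteMeasure ν ∧ ν ≪ μ ∧ μ ≪ ν ∧
      (∀ f : Ω → ℝ, Integrable f μ → Integrable f ν) ∧ ∀ j ∈ A, Integrable (X j) ν := by
  set S : Ω → ℝ := fun ω => 1 + ∑ j ∈ A, |X j ω| with hS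
  have hSm : Measurable S :=
    measurable_const.add (Finset.measurable_fun_sum _ fun j hj => (hX j hj).abs)
  have hS1 (ω : Ω) : 1 ≤ S ω :=
    le_add_of_nonneg_right (Finset.sum_nonneg fun j _ => abs_nonneg _)
  have hS0 (ω : Ω) : 0 < S ω := one_pos.trans_le (hS1 ω)
  obtain ⟨h1, h2, h3, h4, h5, -⟩ := withDensity_ofReal_properties μ (M := 1) hSm.inv
    (fun ω => inv_pos.2 (hS0 ω)) (fun ω => inv_le_one_of_one_le₀ (hS1 ω)) rfl
  refine ⟨_, h1, h2, h3, h5, fun j hj => (h4 _).2 ?_⟩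
  refine Integrable.of_bound (hSm.inv.mul (hX j hj)).aestronglyMeasurable 1
    (ae_of_all _ fun ω => ?_)
  rw [Pi.inv_apply, norm_mul, Real.norm_of_nonneg (inv_pos.2 (hS0 ω)).le, inv_mul_le_iff₀ (hS0 ω),
    mul_one, Real.norm_eq_abs]
  exact (Finset.single_le_sum (f := fun j => |X j ω|) (fun j _ => abs_nonneg _) hj).trans
    (le_add_of_nonneg_left zero_le_one)

/-- Terminal gains are measurable at the horizon. -/
theorem measurable_of_mem_gainsSet {Ω : Type*} {J : ℕ} {F : ℕ → MeasurableSpace Ω}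
    (hF : Monotone F) {T : ℕ} {A : Finset (Fin J)} {X : Fin J → ℕ → Ω → ℝ}
    (hX : ∀ j ∈ A, ∀ t, t ≤ T → Measurable[F t] (X j t)) {g : Ω → ℝ}
    (hg : g ∈ gainsSet F T A X) : Measurable[F T] g := by
  obtain ⟨H, hH, rfl⟩ := hg
  refine Finset.measurable_fun_sum _ fun j hj => Finset.measurable_fun_sum _ fun s hs => ?_
  obtain ⟨h1, h2⟩ := Finset.mem_Icc.1 hs
  have hs' : s - 1 ≤ T := (Nat.sub_le s 1).trans h2
  exact ((hH j hj s h1 h2).mono (hF hs') le_rfl).mul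
    (((hX j hj s h2).mono (hF h2) le_rfl).sub ((hX j hj _ hs').mono (hF hs') le_rfl))

theorem add_mem_gainsSet {Ω : Type*} {J : ℕ} {F : ℕ → MeasurableSpace Ω} {T : ℕ}
    {A : Finset (Fin J)} {X : Fin J → ℕ → Ω → ℝ} {g g' : Ω → ℝ}
    (hg : g ∈ gainsSet F T A X) (hg' : g' ∈ gainsSet F T A X) : g + g' ∈ gainsSet F T A X := by
  obtain ⟨H, hH, rfl⟩ := hg
  obtain ⟨H', hH', rfl⟩ := hg'
  refine ⟨H + H', fun j hj s h1 h2 => (hH j hj s h1 h2).add (hH' j hj s h1 h2), ?_⟩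
  ext ω
  simp [Finset.sum_add_distrib, add_mul]

theorem smul_mem_gainsSet {Ω : Type*} {J : ℕ} {F : ℕ → MeasurableSpace Ω} {T : ℕ}
    {A : Finset (Fin J)} {X : Fin J → ℕ → Ω → ℝ} {g : Ω → ℝ}
    (hg : g ∈ gainsSet F T A X) (c : ℝ) : c • g ∈ gainsSet F T A X := by
  obtain ⟨H, hH, rfl⟩ := hg
  refine ⟨c • H, fun j hj s h1 h2 => (hH j hj s h1 h2).const_smul c, ?_⟩
  ext ω
  simp [Finset.mul_sum, mul_assoc]

theorem zero_mem_gainsSet {Ω : Type*} {J : ℕ} {F : ℕ → MeasurableSpace Ω} {T : ℕ}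
    {A : Finset (Fin J)} {X : Fin J → ℕ → Ω → ℝ} : 0 ∈ gainsSet F T A X :=
  ⟨0, fun _ _ _ _ _ => measurable_const, by ext; simp⟩

/-- Holding one unit of one asset between two dates on an event known at the first date. -/
theorem indicator_sub_mem_gainsSet {Ω : Type*} {J : ℕ} {F : ℕ → MeasurableSpace Ω}
    (hF : Monotone F) {T : ℕ} {A : Finset (Fin J)} (X : Fin J → ℕ → Ω → ℝ) {j : Fin J}
    (hj : j ∈ A) {s t : ℕ} (hst : s ≤ t) (htT : t ≤ T) {B : Set Ω} (hB : MeasurableSet[F s] B) :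
    B.indicator (fun ω => X j t ω - X j s ω) ∈ gainsSet F T A X := by
  have htel (a : ℕ → ℝ) : ∑ u ∈ Finset.Ioc s t, (a u - a (u - 1)) = a t - a s := by
    induction t, hst using Nat.le_induction with
    | base => simp
    | succ t hst ih =>
      rw [Finset.sum_Ioc_succ_top hst, ih (t.le_succ.trans htT)]
      simp
  refine ⟨fun j' u => if j' = j ∧ u ∈ Finset.Ioc s t then B.indicator 1 else 0,
    fun j' _ u _ _ => ?_, ?_⟩
  · beta_reduce
    split_ifs with h
    · refine (measurable_const.indicator hB : Measurable[F s] _).mono (hF ?_) le_rfl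
      exact Nat.le_sub_one_of_lt (Finset.mem_Ioc.1 h.2).1
    · exact measurable_const
  · ext ω
    rw [Finset.sum_eq_single_of_mem j hj]
    · have hsub : Finset.Ioc s t ⊆ Finset.Icc 1 T := fun u hu => by
        rw [Finset.mem_Ioc] at hu
        rw [Finset.mem_Icc]
        omega
      rw [← Finset.sum_subset hsub]
      · rw [Finset.sum_congr rfl (g := fun u => B.indicator 1 ω * (X j u ω - X j (u - 1) ω))
          (fun u hu => by simp only [hu, and_self, if_true]), ← Finset.mul_sum,
          htel fun u => X j u ω]
        by_cases hω : ω ∈ B <;> simp [hω]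
      · intro u _ hu
        simp only [hu, and_false, if_false, Pi.zero_apply, zero_mul]
    · intro j' _ hne
      simp [hne]

/-- Under an equivalent martingale measure, a terminal gain bounded below by an integrable function
is integrable with nonpositive mean. -/
theorem integrable_gain_of_mem_martMeasures {Ω : Type*} {m0 : MeasurableSpace Ω} {J : ℕ}
    {P Q : Measure Ω} {F : ℕ → MeasurableSpace Ω} (hF : Monotone F) (hFle : ∀ t, F t ≤ m0) {T : ℕ}
    {A : Finset (Fin J)} {X : Fin J → ℕ → Ω → ℝ}
    (hX : ∀ j ∈ A, ∀ t, t ≤ T → Measurable[F t] (X j t)) (hQ : Q ∈ martMeasures P F T A X)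
    {g : Ω → ℝ} (hg : g ∈ gainsSet F T A X) {W : Ω → ℝ} (hW : Integrable W Q)
    (hle : ∀ᵐ ω ∂Q, -W ω ≤ g ω) : Integrable g Q ∧ ∫ ω, g ω ∂Q ≤ 0 := by
  obtain ⟨hprob, -, -, hmart⟩ := hQ
  obtain ⟨H, hH, rfl⟩ := hg
  set D : ℕ → Ω → ℝ := fun s ω => ∑ j ∈ A, H j (s + 1) ω * (X j (s + 1) ω - X j s ω) with hD
  have heq : (fun ω => ∑ j ∈ A, ∑ s ∈ Finset.Icc 1 T, H j s ω * (X j s ω - X j (s - 1) ω))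
      = fun ω => ∑ s ∈ Finset.range T, D s ω := by
    ext ω
    rw [Finset.sum_comm, Finset.range_eq_Ico, ← Finset.Ico_add_one_right_eq_Icc,
      ← Finset.sum_Ico_add' _ 0 T 1]
    simp [hD]
  rw [heq] at hle ⊢
  refine integrable_sum_of_isLocallyCentered hF hFle T (fun s hs => ?_) (fun s hs => ?_) hW hle
  · refine Finset.measurable_fun_sum _ fun j hj => ?_
    exact ((hH j hj (s + 1) (Nat.le_add_left 1 s) hs).mono (hF s.le_succ) le_rfl).mul
      ((hX j hj (s + 1) hs).sub ((hX j hj s hs.le).mono (hF s.le_succ) le_rfl))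
  · refine isLocallyCentered_sum Q (hFle s) A (fun j => H j (s + 1))
      (fun j ω => X j (s + 1) ω - X j s ω) (fun j hj => hH j hj (s + 1) (Nat.le_add_left 1 s) hs)
      (fun j hj => ((hmart j hj).1 _ hs).sub ((hmart j hj).1 _ hs.le)) fun j hj => ?_
    obtain ⟨hi, hc⟩ := hmart j hj
    filter_upwards [condExp_sub (hi _ hs) (hi _ hs.le) (F s), hc s (s + 1) s.le_succ hs,
      hc s s le_rfl hs.le] with ω h1 h2 h3
    refine h1.trans ?_
    rw [Pi.sub_apply, ← h2, ← h3, sub_self]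
    rfl

/-- A probability measure annihilating all integrable terminal gains is a martingale measure. -/
theorem mem_martMeasures_of_integral_gain_nonpos {Ω : Type*} {m0 : MeasurableSpace Ω} {J : ℕ}
    {P Q : Measure Ω} [IsProbabilityMeasure Q] (hQP : Q ≪ P) (hPQ : P ≪ Q)
    {F : ℕ → MeasurableSpace Ω} (hFle : ∀ t, F t ≤ m0) {T : ℕ}
    {A : Finset (Fin J)} {X : Fin J → ℕ → Ω → ℝ}
    (hX : ∀ j ∈ A, ∀ t, t ≤ T → Measurable[F t] (X j t))
    (hXi : ∀ j ∈ A, ∀ t, t ≤ T → Integrable (X j t) Q)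
    (hgain : ∀ j ∈ A, ∀ s t, s ≤ t → t ≤ T → ∀ B, MeasurableSet[F s] B →
      ∫ ω, B.indicator (fun ω => X j t ω - X j s ω) ω ∂Q = 0) :
    Q ∈ martMeasures P F T A X := by
  refine ⟨inferInstance, hQP, hPQ, fun j hj => ⟨hXi j hj, fun s t hst htT => ?_⟩⟩
  have hs := hXi j hj s (hst.trans htT)
  have ht := hXi j hj t htT
  refine ae_eq_condExp_of_forall_setIntegral_eq (hFle s) ht (fun _ _ _ => hs.integrableOn)
    (fun B hB _ => ?_) (hX j hj s (hst.trans htT)).stronglyMeasurable.aestronglyMeasurable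
  have h := hgain j hj s t hst htT B hB
  rw [integral_indicator (hFle s _ hB), integral_sub ht.integrableOn hs.integrableOn] at h
  linarith

/-- collective FTAP I (Theorem Th1). -/
theorem collective_FTAP_I
    {Ω : Type*} [m0 : MeasurableSpace Ω]
    (P : Measure Ω) [IsProbabilityMeasure P]
    (T J N : ℕ) (hT : 1 ≤ T) (hJ : 1 ≤ J) (hN : 1 ≤ N)
    (F : Fin N → ℕ → MeasurableSpace Ω)
    (hFmono : ∀ i, Monotone (F i))
    (hFle : ∀ i t, F i t ≤ m0)
    (hFzero : ∀ i, ∀ A : Set Ω, MeasurableSet[F i 0] A → P A = 0 ∨ P A = 1)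
    (X : Fin J → ℕ → Ω → ℝ)
    (assets : Fin N → Finset (Fin J))
    (hassets : ∀ i, (assets i).Nonempty)
    (hcover : ∀ j, ∃ i, j ∈ assets i)
    (hadapted : ∀ i, ∀ j ∈ assets i, ∀ t, t ≤ T → Measurable[F i t] (X j t))
    (𝒴 : Set (Fin N → Ω → ℝ))
    (h𝒴meas : ∀ y ∈ 𝒴, ∀ i, Measurable[F i T] (y i))
    (h𝒴R0 : zeroSum Ω N ⊆ 𝒴)
    (h𝒴add : ∀ y ∈ 𝒴, ∀ z ∈ 𝒴, (fun i ω => y i ω + z i ω) ∈ 𝒴)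
    (h𝒴cone : ∀ y ∈ 𝒴, ∀ c : ℝ, 0 ≤ c → (fun i ω => c * y i ω) ∈ 𝒴)
    (hclosed : ClosedAS P (fun i => F i T)
      (KY P (fun i => F i T) (fun i => gainsSet (F i) T (assets i) X) 𝒴))
    (P' : Measure Ω) (hP'prob : IsProbabilityMeasure P')
    (hP'equiv : P' ≪ P ∧ P ≪ P')
    (h𝒴int : ∀ y ∈ 𝒴, ∀ i, Integrable (y i) P') :
    NCA P (fun i => gainsSet (F i) T (assets i) X) 𝒴 ↔
      (MeY P F T assets X 𝒴).Nonempty := by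
  constructor
  · intro hNCA
    set FT : Fin N → MeasurableSpace Ω := fun i => F i T with hFT
    set K : Fin N → Set (Ω → ℝ) := fun i => gainsSet (F i) T (assets i) X with hK
    have hKm (i : Fin N) {k : Ω → ℝ} (hk : k ∈ K i) : Measurable[F i T] k :=
      measurable_of_mem_gainsSet (hFmono i) (hadapted i) hk
    have h0𝒴 : (fun (_ : Fin N) (_ : Ω) => (0 : ℝ)) ∈ 𝒴 :=
      h𝒴R0 ⟨0, by simp, fun i => rfl⟩
    have hKmem {k : Fin N → Ω → ℝ} (hk : ∀ i, k i ∈ K i) : k ∈ KY P FT K 𝒴 :=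
      ⟨k, 0, _, h0𝒴, hk, fun i => ⟨measurable_const, ae_of_all _ fun _ => le_rfl⟩,
        fun i => by ext; simp⟩
    have h𝒴mem {y : Fin N → Ω → ℝ} (hy : y ∈ 𝒴) : y ∈ KY P FT K 𝒴 :=
      ⟨0, 0, y, hy, fun i => zero_mem_gainsSet,
        fun i => ⟨measurable_const, ae_of_all _ fun _ => le_rfl⟩, fun i => by ext; simp⟩
    have hXm (p : Fin J × ℕ) (hp : p ∈ Finset.univ ×ˢ Finset.range (T + 1)) :
        Measurable (X p.1 p.2) := by
      obtain ⟨i, hi⟩ := hcover p.1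
      have hpT : p.2 ≤ T := Nat.lt_succ_iff.1 (Finset.mem_range.1 (Finset.mem_product.1 hp).2)
      exact (hadapted i _ hi _ hpT).mono (hFle i _) le_rfl
    obtain ⟨μ, hμfin, hμP', hP'μ, hμint, hμX⟩ := exists_equiv_measure_integrable P'
      (Finset.univ ×ˢ Finset.range (T + 1)) (fun p : Fin J × ℕ => X p.1 p.2) hXm
    have hμP : μ ≪ P := hμP'.trans hP'equiv.1
    have hPμ : P ≪ μ := hP'equiv.2.trans hP'μ
    have hXμ (j : Fin J) (t : ℕ) (ht : t ≤ T) : Integrable (X j t) μ :=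
      hμX (j, t) (Finset.mem_product.2
        ⟨Finset.mem_univ _, Finset.mem_range.2 (Nat.lt_succ_of_le ht)⟩)
    have hPtrim (i : Fin N) {p : Ω → Prop} (hp : ∀ᵐ ω ∂μ.trim (hFle i T), p ω) : ∀ᵐ ω ∂P, p ω :=
      hPμ.ae_le (ae_of_ae_trim (hFle i T) hp)
    obtain ⟨z, hzm, hz0, hz1, hzC⟩ := exists_pos_densities_of_closed_cone
      (β := fun _ : Fin N => Ω) (mβ := FT) (fun i => μ.trim (hFle i T)) (KY P FT K 𝒴)
      (by
        rintro f ⟨k, l, y, hy, hk, hl, hf⟩ f' ⟨k', l', y', hy', hk', hl', hf'⟩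
        refine ⟨k + k', l + l', _, h𝒴add y hy y' hy', fun i => add_mem_gainsSet (hk i) (hk' i),
          fun i => ⟨(hl i).1.add (hl' i).1, ?_⟩, fun i => ?_⟩
        · filter_upwards [(hl i).2, (hl' i).2] with ω h1 h2
          exact add_nonneg h1 h2
        · ext ω
          simp only [Pi.add_apply, hf i, hf' i]
          ring)
      (by
        rintro f ⟨k, l, y, hy, hk, hl, hf⟩ c hc
        refine ⟨c • k, c • l, _, h𝒴cone y hy c hc, fun i => smul_mem_gainsSet (hk i) c,
          fun i => ⟨(hl i).1.const_smul c, ?_⟩, fun i => ?_⟩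
        · filter_upwards [(hl i).2] with ω h1
          exact mul_nonneg hc h1
        · ext ω
          simp only [Pi.smul_apply, smul_eq_mul, hf i]
          ring)
      (by
        intro f hf hf0
        refine ⟨0, -f, _, h0𝒴, fun i => zero_mem_gainsSet, fun i => ⟨(hf i).neg, ?_⟩,
          fun i => by ext; simp⟩
        filter_upwards [hPtrim i (hf0 i)] with ω hω
        simpa using hω)
      (fun f g hf hg hfg => hclosed f g hf hg fun i => hPtrim i (hfg i))
      (by
        rintro f ⟨k, l, y, hy, hk, hl, hf⟩ hf0 i
        have hf0' (i : Fin N) : ∀ᵐ ω ∂P, 0 ≤ k i ω - l i ω + y i ω := by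
          filter_upwards [hPtrim i (hf0 i)] with ω hω
          simpa [hf i] using hω
        have h := hNCA k y hy hk (fun i => by
          filter_upwards [hf0' i, (hl i).2] with ω h1 h2
          linarith) i
        have hfm : Measurable[F i T] (f i) := by
          rw [hf i]
          exact ((hKm i (hk i)).sub (hl i).1).add (h𝒴meas y hy i)
        have hfμ : ∀ᵐ ω ∂μ, f i ω = 0 := by
          refine hμP.ae_le ?_
          filter_upwards [hf0' i, (hl i).2, h] with ω h1 h2 h3
          rw [hf i]
          linarith
        exact StronglyMeasurable.ae_eq_trim_of_stronglyMeasurable (hFle i T)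
          hfm.stronglyMeasurable stronglyMeasurable_const hfμ)
    have hzC' (f : Fin N → Ω → ℝ) (hf : f ∈ KY P FT K 𝒴) (hfm : ∀ i, Measurable[F i T] (f i))
        (hfi : ∀ i, Integrable (f i) μ) : ∑ i, ∫ ω, z i ω * f i ω ∂μ ≤ 0 := by
      refine le_of_eq_of_le (Finset.sum_congr rfl fun i _ => ?_)
        (hzC f hf hfm fun i => (hfi i).trim (hFle i T) (hfm i).stronglyMeasurable)
      exact integral_trim (hFle i T) ((hzm i).mul (hfm i)).stronglyMeasurable
    have hzm' (i : Fin N) : Measurable (z i) := (hzm i).mono (hFle i T) le_rfl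
    have hzint (i : Fin N) : Integrable (z i) μ :=
      Integrable.of_bound (hzm' i).aestronglyMeasurable 1
        (ae_of_all _ fun ω => by rw [Real.norm_of_nonneg (hz0 i ω).le]; exact hz1 i ω)
    have hμ0 : NeZero μ := ⟨fun h => by
      have := hPμ (by simp [h] : μ Set.univ = 0)
      simp at this⟩
    have hmass (i : Fin N) : 0 < ∫ ω, z i ω ∂μ := by
      rw [integral_pos_iff_support_of_nonneg (fun ω => (hz0 i ω).le) (hzint i)]
      have : Function.support (z i) = Set.univ := by
        ext ω
        simp [(hz0 i ω).ne']
      rw [this, Measure.measure_univ_pos]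
      exact hμ0.out
    have hmass_le (i j : Fin N) : ∫ ω, z i ω ∂μ ≤ ∫ ω, z j ω ∂μ := by
      have h := hzC' (fun l _ => (Pi.single i 1 - Pi.single j 1 : Fin N → ℝ) l)
        (h𝒴mem (h𝒴R0 ⟨_, by simp, fun _ => rfl⟩)) (fun _ => measurable_const)
        (fun _ => integrable_const _)
      simp_rw [integral_mul_const, Pi.sub_apply, mul_sub, Finset.sum_sub_distrib] at h
      simpa [Pi.single_apply] using h
    set i₀ : Fin N := ⟨0, hN⟩ with hi₀
    set c : ℝ := (∫ ω, z i₀ ω ∂μ)⁻¹ with hc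
    have hc0 : 0 < c := inv_pos.2 (hmass i₀)
    set Q : Fin N → Measure Ω := fun i => μ.withDensity fun ω => ENNReal.ofReal (c * z i ω) with hQ
    have hQprop (i : Fin N) := withDensity_ofReal_properties μ (M := c)
      ((hzm' i).const_mul c) (fun ω => mul_pos hc0 (hz0 i ω))
      (fun ω => mul_le_of_le_one_right hc0.le (hz1 i ω)) (rfl : Q i = _)
    have hQint (i : Fin N) (f : Ω → ℝ) : ∫ ω, f ω ∂Q i = c * ∫ ω, z i ω * f ω ∂μ := by
      rw [(hQprop i).2.2.2.2.2 f, ← integral_const_mul]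
      simp_rw [mul_assoc]
    have hQprob (i : Fin N) : IsProbabilityMeasure (Q i) := by
      have := (hQprop i).1
      have h := hQint i fun _ => 1
      simp only [integral_const, smul_eq_mul, mul_one] at h
      rw [le_antisymm (hmass_le i i₀) (hmass_le i₀ i), hc, inv_mul_cancel₀ (hmass i₀).ne'] at h
      exact ⟨by rwa [measureReal_def, ENNReal.toReal_eq_one_iff] at h⟩
    have hgain (i : Fin N) (k : Ω → ℝ) (hk : k ∈ K i) (hki : Integrable k μ) :
        ∫ ω, z i ω * k ω ∂μ ≤ 0 := by
      have hmem (l : Fin N) : (if l = i then k else 0) ∈ K l := by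
        split_ifs with hl
        · exact hl ▸ hk
        · exact zero_mem_gainsSet
      have h := hzC' (fun l => if l = i then k else 0) (hKmem hmem) (fun l => hKm l (hmem l))
        (fun l => by
          split_ifs
          · exact hki
          · exact integrable_zero _ _ _)
      rw [Finset.sum_eq_single_of_mem i (Finset.mem_univ i) (fun l _ hl => by simp [hl])] at h
      simpa using h
    refine ⟨Q, fun i => ?_, fun y hy i => (hQprop i).2.2.2.2.1 _ (hμint _ (h𝒴int y hy i)),
      fun y hy => ?_⟩
    · have := hQprob i
      refine mem_martMeasures_of_integral_gain_nonpos ((hQprop i).2.1.trans hμP)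
        (hPμ.trans (hQprop i).2.2.1) (hFle i) (hadapted i)
        (fun j _ t ht => (hQprop i).2.2.2.2.1 _ (hXμ j t ht)) fun j hj s t hst htT B hB => ?_
      have hk := indicator_sub_mem_gainsSet (hFmono i) X hj hst htT hB
      have hki : Integrable (B.indicator fun ω => X j t ω - X j s ω) μ :=
        ((hXμ j t htT).sub (hXμ j s (hst.trans htT))).indicator (hFle i s _ hB)
      have h1 := hgain i _ hk hki
      have h2 := hgain i _ (smul_mem_gainsSet hk (-1)) (hki.smul (-1 : ℝ))
      have h3 : ∫ ω, z i ω * ((-1 : ℝ) • B.indicator fun ω => X j t ω - X j s ω) ω ∂μ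
          = -∫ ω, z i ω * B.indicator (fun ω => X j t ω - X j s ω) ω ∂μ := by
        rw [← integral_neg]
        simp
      rw [hQint, le_antisymm h1 (by linarith), mul_zero]
    · simp_rw [hQint]
      rw [← Finset.mul_sum]
      exact mul_nonpos_of_nonneg_of_nonpos hc0.le
        (hzC' y (h𝒴mem hy) (h𝒴meas y hy) fun i => hμint _ (h𝒴int y hy i))
  · rintro ⟨Q, hQ, hQi, hQY⟩ k y hy hk hnn i
    have hgain (i : Fin N) := integrable_gain_of_mem_martMeasures (hFmono i) (hFle i) (hadapted i)
      (hQ i) (hk i) (hQi y hy i) (by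
        filter_upwards [(hQ i).2.1.ae_le (hnn i)] with ω hω
        linarith)
    have hsumi (i : Fin N) : Integrable (fun ω => k i ω + y i ω) (Q i) :=
      (hgain i).1.add (hQi y hy i)
    have hnn' (i : Fin N) : 0 ≤ᵐ[Q i] fun ω => k i ω + y i ω := (hQ i).2.1.ae_le (hnn i)
    have hint0 (i : Fin N) : 0 ≤ ∫ ω, k i ω + y i ω ∂Q i := integral_nonneg_of_ae (hnn' i)
    have hsum : ∑ i, ∫ ω, k i ω + y i ω ∂Q i ≤ 0 := by
      simp_rw [fun i => integral_add (hgain i).1 (hQi y hy i), Finset.sum_add_distrib]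
      exact add_nonpos (Finset.sum_nonpos fun i _ => (hgain i).2) (hQY y hy)
    have hzero := (Finset.sum_eq_zero_iff_of_nonneg fun i _ => hint0 i).1
      (le_antisymm hsum (Finset.sum_nonneg fun i _ => hint0 i)) i (Finset.mem_univ i)
    exact (hQ i).2.2.1.ae_le ((integral_eq_zero_iff_of_nonneg_ae (hnn' i) (hsumi i)).1 hzero)

end CollectiveArb
end

section
/- Let 𝒴 ⊆ L^0(Ω,𝐅_T,P) be a finite-dimensional vector subspace containing ℝ^N_0. Then NCA(𝒴) holds if and only if ℳ_e(𝒴) ≠ ∅. -/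
open MeasureTheory Filter Topology

namespace CollectiveArb

variable {Ω : Type*}

/-- A bounded sequence of real random variables converges along a measurable random subsequence. -/
lemma exists_measurable_subseq {Ω : Type*} [MeasurableSpace Ω] (v : ℕ → Ω → ℝ)
    (hv : ∀ n, Measurable (v n)) (hb : ∀ n ω, |v n ω| ≤ 1) :
    ∃ (w : Ω → ℝ) (τ : ℕ → Ω → ℕ), Measurable w ∧ (∀ k, Measurable (τ k)) ∧
      (∀ k ω, k ≤ τ k ω) ∧ ∀ ω, Tendsto (fun k => v (τ k ω) ω) atTop (𝓝 (w ω)) := by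
  classical
  set w : Ω → ℝ := fun ω => liminf (fun n => v n ω) atTop with hw
  have hwm : Measurable w := Measurable.liminf hv
  have hex : ∀ k ω, ∃ n, k ≤ n ∧ |v n ω - w ω| < 1 / ((k : ℝ) + 1) := by
    intro k ω
    have hpos : (0 : ℝ) < 1 / ((k : ℝ) + 1) := by positivity
    have hbd : IsBoundedUnder (· ≥ ·) atTop (fun n => v n ω) :=
      isBoundedUnder_of ⟨-1, fun n => (abs_le.1 (hb n ω)).1⟩
    have hbd' : IsBoundedUnder (· ≤ ·) atTop (fun n => v n ω) :=
      isBoundedUnder_of ⟨1, fun n => (abs_le.1 (hb n ω)).2⟩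
    have h1 : ∃ᶠ n in atTop, v n ω < w ω + 1 / ((k : ℝ) + 1) :=
      frequently_lt_of_liminf_lt hbd'.isCoboundedUnder_ge
        (show w ω < _ by linarith)
    have h2 : ∀ᶠ n in atTop, w ω - 1 / ((k : ℝ) + 1) < v n ω :=
      eventually_lt_of_lt_liminf (show _ < w ω by linarith) hbd
    obtain ⟨n, h3, h4, h5⟩ := (h1.and_eventually (h2.and (eventually_ge_atTop k))).exists
    exact ⟨n, h5, abs_lt.2 ⟨by linarith, by linarith⟩⟩
  refine ⟨w, fun k ω => Nat.find (hex k ω), hwm, fun k => ?_, fun k ω =>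
    (Nat.find_spec (hex k ω)).1, fun ω => ?_⟩
  · refine measurable_find (hex k) fun n => ?_
    have : Measurable fun ω => |v n ω - w ω| := ((hv n).sub hwm).abs
    exact (MeasurableSet.const _).inter (measurableSet_lt this measurable_const)
  · rw [tendsto_iff_dist_tendsto_zero]
    refine squeeze_zero (fun _ => dist_nonneg) (fun k => ?_) tendsto_one_div_add_atTop_nhds_zero_nat
    rw [Real.dist_eq]
    exact (Nat.find_spec (hex k ω)).2.le

/-- `L` is closed under `G`-measurable scaling and `G`-measurable countable pasting. -/
structure IsStable {Ω : Type*} (G : MeasurableSpace Ω) (L : Submodule ℝ (Ω → ℝ)) : Prop where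
  mul : ∀ g : Ω → ℝ, Measurable[G] g → ∀ m ∈ L, g * m ∈ L
  paste : ∀ τ : Ω → ℕ, Measurable[G] τ → ∀ f : ℕ → Ω → ℝ, (∀ n, f n ∈ L) →
    (fun ω => f (τ ω) ω) ∈ L

/-- The set of random variables dominated by an element of `L` is closed under a.e. convergence. -/
def ClosedDown {Ω : Type*} [MeasurableSpace Ω] (μ : Measure Ω) (L : Submodule ℝ (Ω → ℝ)) : Prop :=
  ∀ (f : ℕ → Ω → ℝ) (g : Ω → ℝ), (∀ n, ∃ m ∈ L, f n ≤ᵐ[μ] m) →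
    (∀ᵐ ω ∂μ, Tendsto (fun n => f n ω) atTop (𝓝 (g ω))) → ∃ m ∈ L, g ≤ᵐ[μ] m

/-- `L` contains no nonnegative random variables except null ones. -/
def NoArb {Ω : Type*} [MeasurableSpace Ω] (μ : Measure Ω) (L : Submodule ℝ (Ω → ℝ)) : Prop :=
  ∀ m ∈ L, 0 ≤ᵐ[μ] m → m =ᵐ[μ] 0

lemma NoArb.mono {Ω : Type*} [MeasurableSpace Ω] {μ : Measure Ω} {L L' : Submodule ℝ (Ω → ℝ)}
    (h : NoArb μ L') (hL : L ≤ L') : NoArb μ L := fun m hm => h m (hL hm)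

/-- All `G`-measurable multiples of `ξ`. -/
def multiples {Ω : Type*} (G : MeasurableSpace Ω) (ξ : Ω → ℝ) : Submodule ℝ (Ω → ℝ) where
  carrier := {f | ∃ H : Ω → ℝ, Measurable[G] H ∧ f = H * ξ}
  add_mem' := by
    rintro _ _ ⟨H, hH, rfl⟩ ⟨H', hH', rfl⟩
    exact ⟨H + H', hH.add hH', (add_mul _ _ _).symm⟩
  zero_mem' := ⟨0, measurable_const, (zero_mul _).symm⟩
  smul_mem' := by
    rintro c _ ⟨H, hH, rfl⟩
    exact ⟨c • H, hH.const_smul c, by rw [smul_mul_assoc]⟩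

lemma IsStable.mono {Ω : Type*} {G G' : MeasurableSpace Ω} {L : Submodule ℝ (Ω → ℝ)}
    (h : IsStable G L) (hG : G' ≤ G) : IsStable G' L :=
  ⟨fun g hg => h.mul g (hg.mono hG le_rfl), fun τ hτ => h.paste τ (hτ.mono hG le_rfl)⟩

lemma isStable_bot {Ω : Type*} (G : MeasurableSpace Ω) :
    IsStable G (⊥ : Submodule ℝ (Ω → ℝ)) := by
  refine ⟨fun g _ m hm => ?_, fun τ _ f hf => ?_⟩
  · simp [(Submodule.mem_bot ℝ).1 hm]
  · refine (Submodule.mem_bot ℝ).2 (funext fun ω => ?_)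
    simp [(Submodule.mem_bot ℝ).1 (hf (τ ω))]

lemma closedDown_bot {Ω : Type*} [MeasurableSpace Ω] (μ : Measure Ω) :
    ClosedDown μ (⊥ : Submodule ℝ (Ω → ℝ)) := by
  intro f g hf hg
  refine ⟨0, Submodule.zero_mem _, ?_⟩
  have : ∀ᵐ ω ∂μ, ∀ n, f n ω ≤ 0 := by
    refine ae_all_iff.2 fun n => ?_
    obtain ⟨m, hm, h⟩ := hf n
    rw [(Submodule.mem_bot ℝ).1 hm] at h
    exact h
  filter_upwards [this, hg] with ω h1 h2
  exact le_of_tendsto' h2 h1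

lemma IsStable.sup_multiples {Ω : Type*} {G : MeasurableSpace Ω} {L : Submodule ℝ (Ω → ℝ)}
    (h : IsStable G L) (ξ : Ω → ℝ) : IsStable G (L ⊔ multiples G ξ) := by
  refine ⟨fun g hg m hm => ?_, fun τ hτ f hf => ?_⟩
  · obtain ⟨m, hmL, _, ⟨H, hH, rfl⟩, rfl⟩ := Submodule.mem_sup.1 hm
    rw [mul_add]
    exact Submodule.add_mem_sup (h.mul g hg m hmL) ⟨g * H, hg.mul hH, (mul_assoc _ _ _).symm⟩
  · have hf' : ∀ n, ∃ m ∈ L, ∃ H : Ω → ℝ, Measurable[G] H ∧ f n = m + H * ξ := by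
      intro n
      obtain ⟨m, hm, _, ⟨H, hH, rfl⟩, h⟩ := Submodule.mem_sup.1 (hf n)
      exact ⟨m, hm, H, hH, h.symm⟩
    choose m hm H hH hfm using hf'
    have hHτ : Measurable[G] fun ω => H (τ ω) ω :=
      (measurable_from_prod_countable_right (f := fun p : ℕ × Ω => H p.1 p.2) hH).comp
        (hτ.prodMk measurable_id)
    have : (fun ω => f (τ ω) ω) = (fun ω => m (τ ω) ω) + (fun ω => H (τ ω) ω) * ξ := by
      funext ω
      simp [hfm]
    rw [this]
    exact Submodule.add_mem_sup (h.paste τ hτ m hm) ⟨_, hHτ, rfl⟩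

lemma IsStable.closedDown_sup_multiples {Ω : Type*} {G : MeasurableSpace Ω}
    [MeasurableSpace Ω] {μ : Measure Ω} {L : Submodule ℝ (Ω → ℝ)} (h : IsStable G L)
    (hL : ClosedDown μ L) (ξ : Ω → ℝ) (hna : NoArb μ (L ⊔ multiples G ξ)) :
    ClosedDown μ (L ⊔ multiples G ξ) := by
  intro f g hf hfg
  have hf' : ∀ n, ∃ m ∈ L, ∃ H : Ω → ℝ, Measurable[G] H ∧ ∀ᵐ ω ∂μ, f n ω ≤ m ω + H ω * ξ ω := by
    intro n
    obtain ⟨_, hm', hle⟩ := hf n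
    obtain ⟨m, hm, _, ⟨H, hH, rfl⟩, rfl⟩ := Submodule.mem_sup.1 hm'
    exact ⟨m, hm, H, hH, hle⟩
  choose m hm H hH hle using hf'
  have hle' : ∀ᵐ ω ∂μ, ∀ n, f n ω ≤ m n ω + H n ω * ξ ω := ae_all_iff.2 hle
  set u : ℕ → Ω → ℝ := fun n ω => (1 + |H n ω|)⁻¹ with hu
  have hupos : ∀ n ω, 0 < u n ω := fun n ω => by simp only [hu]; positivity
  have hum : ∀ n, Measurable[G] (u n) := fun n => (((measurable_norm.comp (hH n)).const_add 1).inv)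
  set v : ℕ → Ω → ℝ := fun n ω => u n ω * H n ω with hv
  have hvm : ∀ n, Measurable[G] (v n) := fun n => (hum n).mul (hH n)
  have huv : ∀ n ω, u n ω = 1 - |v n ω| := by
    intro n ω
    simp only [hv, abs_mul, abs_of_pos (hupos n ω)]
    have : u n ω * (1 + |H n ω|) = 1 := inv_mul_cancel₀ (by positivity)
    linarith
  obtain ⟨w, τ, hwm, hτ, hkτ, hlim⟩ := @exists_measurable_subseq Ω G v hvm
    (fun n ω => by linarith [huv n ω, hupos n ω])
  set a : Ω → ℝ := fun ω => 1 - |w ω| with ha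
  have ham : Measurable[G] a := (measurable_norm.comp hwm).const_sub 1
  have hτtop : ∀ ω, Tendsto (fun k => τ k ω) atTop atTop := fun ω =>
    tendsto_atTop_mono (fun k => hkτ k ω) tendsto_id
  have halim : ∀ ω, Tendsto (fun k => u (τ k ω) ω) atTop (𝓝 (a ω)) := by
    intro ω
    simp only [huv]
    exact (hlim ω).abs.const_sub 1
  -- the homogenized limit
  obtain ⟨m₁, hm₁, hle₁⟩ := hL (fun k ω => u (τ k ω) ω * f (τ k ω) ω - v (τ k ω) ω * ξ ω)
    (fun ω => a ω * g ω - w ω * ξ ω)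
    (fun k => ⟨fun ω => u (τ k ω) ω * m (τ k ω) ω,
      h.paste (τ k) (hτ k) (fun n => u n * m n) (fun n => h.mul _ (hum n) _ (hm n)), by
        filter_upwards [hle'] with ω hω
        have := mul_le_mul_of_nonneg_left (hω (τ k ω)) (hupos (τ k ω) ω).le
        simp only [hv]
        linarith⟩)
    (by
      filter_upwards [hfg] with ω hω
      exact ((halim ω).mul (hω.comp (hτtop ω))).sub ((hlim ω).mul_const _))
  -- the part where the coefficients explode
  set b : Ω → ℝ := Set.indicator {ω | a ω = 0} 1 with hb
  have hBm : MeasurableSet[G] {ω | a ω = 0} := ham (measurableSet_singleton 0)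
  have hbm : Measurable[G] b := Measurable.indicator (measurable_const (a := (1 : ℝ))) hBm
  have hzero : ∀ᵐ ω ∂μ, b ω * m₁ ω + b ω * w ω * ξ ω = 0 := by
    refine hna (b * m₁ + (b * w) * ξ) (Submodule.add_mem_sup (h.mul _ hbm _ hm₁)
      ⟨b * w, hbm.mul hwm, rfl⟩) ?_
    filter_upwards [hle₁] with ω hω
    by_cases hω' : a ω = 0
    · simp only [hω'] at hω
      simp [hb, hω']
      linarith
    · simp [hb, hω']
  obtain ⟨m₂, hm₂, hle₂⟩ := hL (fun n ω => b ω * f n ω) (fun ω => b ω * g ω)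
    (fun n => ⟨b * m n + (-(H n * w * b)) * m₁, L.add_mem (h.mul _ hbm _ (hm n))
      (h.mul _ ((((hH n).mul hwm).mul hbm).neg) _ hm₁), by
        filter_upwards [hle', hzero] with ω hω h0
        by_cases hω' : a ω = 0
        · have hb1 : b ω = 1 := by simp [hb, hω']
          have hw1 : w ω * w ω = 1 := by
            rw [← abs_mul_abs_self, show |w ω| = 1 by simp only [ha] at hω'; linarith, one_mul]
          simp only [hb1, Pi.add_apply, Pi.mul_apply, Pi.neg_apply] at h0 ⊢
          have h3 : ξ ω = -(w ω * m₁ ω) := by linear_combination w ω * h0 - ξ ω * hw1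
          have := hω n
          rw [h3] at this
          linarith
        · simp [hb, hω']⟩)
    (by
      filter_upwards [hfg] with ω hω
      exact hω.const_mul _)
  refine ⟨a⁻¹ * m₁ + m₂ + (a⁻¹ * w) * ξ, Submodule.add_mem_sup
    (L.add_mem (h.mul _ ham.inv _ hm₁) hm₂) ⟨a⁻¹ * w, ham.inv.mul hwm, rfl⟩, ?_⟩
  filter_upwards [hle₁, hle₂] with ω h1 h2
  simp only [Pi.add_apply, Pi.mul_apply, Pi.inv_apply]
  by_cases hω : a ω = 0
  · have hb1 : b ω = 1 := by simp [hb, hω]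
    rw [hb1] at h2
    simp only [hω]
    linarith
  · have hb0 : b ω = 0 := by simp [hb, hω]
    have hapos : 0 < a ω := by
      refine lt_of_le_of_ne ?_ (Ne.symm hω)
      exact ge_of_tendsto' (halim ω) fun k => (hupos _ _).le
    rw [hb0] at h2
    have h3 : g ω = (a ω)⁻¹ * (a ω * g ω) := by field_simp
    have h4 := mul_le_mul_of_nonneg_left (show a ω * g ω ≤ m₁ ω + w ω * ξ ω by linarith)
      (inv_pos.2 hapos).le
    linarith

lemma IsStable.sup_finset_multiples {Ω ι : Type*} {G : MeasurableSpace Ω}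
    {L : Submodule ℝ (Ω → ℝ)} (h : IsStable G L) (ξ : ι → Ω → ℝ) (A : Finset ι) :
    IsStable G (L ⊔ A.sup fun j => multiples G (ξ j)) := by
  classical
  induction A using Finset.induction_on with
  | empty => simpa using h
  | insert j A _ ih =>
    rw [Finset.sup_insert, sup_comm (multiples G (ξ j)), ← sup_assoc]
    exact ih.sup_multiples _

lemma IsStable.closedDown_sup_finset_multiples {Ω ι : Type*} {G : MeasurableSpace Ω}
    [MeasurableSpace Ω] {μ : Measure Ω} {L : Submodule ℝ (Ω → ℝ)} (h : IsStable G L)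
    (hL : ClosedDown μ L) (ξ : ι → Ω → ℝ) (A : Finset ι)
    (hna : NoArb μ (L ⊔ A.sup fun j => multiples G (ξ j))) :
    ClosedDown μ (L ⊔ A.sup fun j => multiples G (ξ j)) := by
  classical
  induction A using Finset.induction_on with
  | empty => simpa using hL
  | insert j A _ ih =>
    rw [Finset.sup_insert, sup_comm (multiples G (ξ j)), ← sup_assoc] at hna ⊢
    exact (h.sup_finset_multiples ξ A).closedDown_sup_multiples (ih (hna.mono le_sup_left)) _ hna

/-- Gains from trading `ξ n` with `G n`-measurable positions, over the times
`n = T - 1, …, T - k`. -/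
def lateGains {Ω ι : Type*} [Fintype ι] (G : ℕ → MeasurableSpace Ω) (ξ : ℕ → ι → Ω → ℝ) (T : ℕ) :
    ℕ → Submodule ℝ (Ω → ℝ)
  | 0 => ⊥
  | k + 1 => lateGains G ξ T k ⊔
      Finset.univ.sup fun j => multiples (G (T - (k + 1))) (ξ (T - (k + 1)) j)

lemma isStable_lateGains {Ω ι : Type*} [Fintype ι] {G : ℕ → MeasurableSpace Ω} (hG : Monotone G)
    (ξ : ℕ → ι → Ω → ℝ) (T k : ℕ) : IsStable (G (T - k)) (lateGains G ξ T k) := by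
  induction k with
  | zero => exact isStable_bot _
  | succ k ih => exact (ih.mono (hG (by omega))).sup_finset_multiples _ _

lemma closedDown_lateGains {Ω ι : Type*} [Fintype ι] {G : ℕ → MeasurableSpace Ω}
    [MeasurableSpace Ω] {μ : Measure Ω} (hG : Monotone G) (ξ : ℕ → ι → Ω → ℝ) (T k : ℕ)
    (hna : NoArb μ (lateGains G ξ T k)) : ClosedDown μ (lateGains G ξ T k) := by
  induction k with
  | zero => exact closedDown_bot _
  | succ k ih =>
    exact ((isStable_lateGains hG ξ T k).mono (hG (by omega))).closedDown_sup_finset_multiples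
      (ih (hna.mono le_sup_left)) _ _ hna

lemma multiples_le_lateGains {Ω ι : Type*} [Fintype ι] (G : ℕ → MeasurableSpace Ω)
    (ξ : ℕ → ι → Ω → ℝ) {T k n : ℕ} (hn : n < T) (hk : T ≤ n + k) (j : ι) :
    multiples (G n) (ξ n j) ≤ lateGains G ξ T k := by
  induction k with
  | zero => omega
  | succ k ih =>
    rcases Nat.lt_or_ge (n + k) T with h | h
    · obtain rfl : n = T - (k + 1) := by omega
      exact (Finset.le_sup (f := fun j => multiples (G (T - (k + 1))) (ξ (T - (k + 1)) j))
        (Finset.mem_univ j)).trans le_sup_right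
    · exact (ih h).trans le_sup_left

lemma lateGains_le {Ω ι : Type*} [Fintype ι] {G : ℕ → MeasurableSpace Ω}
    {ξ : ℕ → ι → Ω → ℝ} {T : ℕ} {W : Submodule ℝ (Ω → ℝ)}
    (hW : ∀ n < T, ∀ j, multiples (G n) (ξ n j) ≤ W) {k : ℕ} (hk : k ≤ T) :
    lateGains G ξ T k ≤ W := by
  induction k with
  | zero => exact bot_le
  | succ k ih =>
    exact sup_le (ih (by omega)) (Finset.sup_le fun j _ => hW _ (by omega) j)

/-- The closed cone of square-integrable random variables dominated by an element of `L`. -/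
def dominatedCone {Ω : Type*} [MeasurableSpace Ω] {μ : Measure Ω} {L : Submodule ℝ (Ω → ℝ)}
    (hL : ClosedDown μ L) : ProperCone ℝ (Lp ℝ 2 μ) where
  carrier := {f | ∃ m ∈ L, f ≤ᵐ[μ] m}
  add_mem' := by
    rintro f g ⟨m, hm, hf⟩ ⟨m', hm', hg⟩
    refine ⟨m + m', L.add_mem hm hm', ?_⟩
    filter_upwards [hf, hg, Lp.coeFn_add f g] with ω h1 h2 h3
    rw [h3]
    exact add_le_add h1 h2
  zero_mem' := ⟨0, L.zero_mem, (Lp.coeFn_zero ℝ 2 μ).le⟩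
  smul_mem' := by
    rintro c f ⟨m, hm, hf⟩
    refine ⟨(c : ℝ) • m, L.smul_mem _ hm, ?_⟩
    filter_upwards [hf, Lp.coeFn_smul (c : ℝ) f] with ω h1 h2
    have h3 : ((c • f : Lp ℝ 2 μ) : Ω → ℝ) ω = (c : ℝ) * f ω := h2
    rw [h3]
    exact mul_le_mul_of_nonneg_left h1 c.2
  isClosed' := by
    refine isClosed_of_closure_subset fun g hg => ?_
    obtain ⟨f, hf, hfg⟩ := mem_closure_iff_seq_limit.1 hg
    obtain ⟨ns, -, hns⟩ := (tendstoInMeasure_of_tendsto_Lp hfg).exists_seq_tendsto_ae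
    exact hL (fun i => f (ns i)) g (fun i => hf (ns i)) hns

lemma nonneg_of_polar {Ω : Type*} [MeasurableSpace Ω] {μ : Measure Ω} [IsFiniteMeasure μ]
    {L : Submodule ℝ (Ω → ℝ)} (hL : ClosedDown μ L) {z : Lp ℝ 2 μ}
    (hz : ∀ f ∈ dominatedCone hL, inner ℝ f z ≤ 0) : 0 ≤ z := by
  rw [← Lp.coeFn_nonneg]
  refine ae_nonneg_of_forall_setIntegral_nonneg ((Lp.memLp z).integrable one_le_two)
    fun s hs hμs => ?_
  have h := hz (-indicatorConstLp 2 hs hμs.ne (1 : ℝ)) ⟨0, L.zero_mem, ?_⟩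
  · rw [inner_neg_left, L2.inner_indicatorConstLp_one] at h
    linarith
  · filter_upwards [Lp.coeFn_neg (indicatorConstLp 2 hs hμs.ne (1 : ℝ)),
      indicatorConstLp_coeFn (p := 2) (hs := hs) (hμs := hμs.ne) (c := (1 : ℝ))] with ω h1 h2
    rw [h1, Pi.neg_apply, h2]
    simpa using Set.indicator_nonneg (fun _ _ => zero_le_one) ω

lemma exists_polar_setIntegral_pos {Ω : Type*} [MeasurableSpace Ω] {μ : Measure Ω}
    [IsFiniteMeasure μ] {L : Submodule ℝ (Ω → ℝ)} (hL : ClosedDown μ L) (hna : NoArb μ L)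
    {A : Set Ω} (hA : MeasurableSet A) (hμA : μ A ≠ 0) :
    ∃ z : Lp ℝ 2 μ, (∀ f ∈ dominatedCone hL, inner ℝ f z ≤ 0) ∧ 0 < ∫ ω in A, z ω ∂μ := by
  have hnot : indicatorConstLp 2 hA (measure_ne_top μ A) (1 : ℝ) ∉ dominatedCone hL := by
    rintro ⟨m, hm, hle⟩
    have hle' : ∀ᵐ ω ∂μ, A.indicator (fun _ => (1 : ℝ)) ω ≤ m ω := by
      filter_upwards [hle, indicatorConstLp_coeFn (p := 2) (hs := hA)
        (hμs := measure_ne_top μ A) (c := (1 : ℝ))] with ω h1 h2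
      rwa [h2] at h1
    have hm0 : m =ᵐ[μ] 0 := hna m hm (hle'.mono fun ω hω =>
      (Set.indicator_nonneg (fun _ _ => zero_le_one) ω).trans hω)
    refine hμA (measure_mono_null (fun ω hω => ?_) (ae_iff.1 (hle'.and hm0)))
    rintro ⟨h1, h2⟩
    rw [h2, Set.indicator_of_mem hω] at h1
    exact absurd h1 (by norm_num)
  obtain ⟨y, hy, hneg⟩ := (dominatedCone hL).hyperplane_separation' hnot
  refine ⟨-y, fun f hf => ?_, ?_⟩
  · rw [inner_neg_right]
    linarith [hy f hf]
  · rw [← L2.inner_indicatorConstLp_one hA (measure_ne_top μ A), inner_neg_right]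
    linarith

lemma exists_polar_dominating {Ω : Type*} [MeasurableSpace Ω] {μ : Measure Ω}
    [IsFiniteMeasure μ] {L : Submodule ℝ (Ω → ℝ)} (hL : ClosedDown μ L) (z : ℕ → Lp ℝ 2 μ)
    (hz : ∀ n, ∀ f ∈ dominatedCone hL, inner ℝ f (z n) ≤ 0) :
    ∃ Z : Lp ℝ 2 μ, (∀ f ∈ dominatedCone hL, inner ℝ f Z ≤ 0) ∧
      ∀ n, μ {ω | 0 < z n ω} ≤ μ {ω | 0 < Z ω} := by
  set c : ℕ → ℝ := fun n => (1 / 2) ^ n * (1 + ‖z n‖)⁻¹ with hc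
  have hcpos : ∀ n, 0 < c n := fun n => by positivity
  have hsum : Summable fun n => c n • z n := by
    refine Summable.of_norm_bounded summable_geometric_two fun n => ?_
    rw [norm_smul, Real.norm_of_nonneg (hcpos n).le, hc, mul_assoc]
    refine mul_le_of_le_one_right (by positivity) ?_
    rw [inv_mul_le_one₀ (by positivity)]
    linarith
  have hle : ∀ n, ∀ f ∈ dominatedCone hL, inner ℝ f (c n • z n) ≤ 0 := fun n f hf => by
    rw [inner_smul_right]
    exact mul_nonpos_of_nonneg_of_nonpos (hcpos n).le (hz n f hf)
  refine ⟨∑' n, c n • z n, fun f hf => ?_, fun n => measure_mono_ae ?_⟩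
  · have h := (innerSL ℝ f).hasSum hsum.hasSum
    exact hasSum_le (fun n => hle n f hf) h hasSum_zero
  · have hle : c n • z n ≤ ∑' n, c n • z n :=
      le_hasSum hsum.hasSum n fun k _ => nonneg_of_polar hL fun f hf => hle k f hf
    filter_upwards [(Lp.coeFn_le _ _).2 hle, Lp.coeFn_smul (c n) (z n)] with ω h1 h2 h3
    refine lt_of_lt_of_le ?_ h1
    rw [h2]
    exact mul_pos (hcpos n) h3

/-- **Kreps–Yan** in `L²`: a strictly positive density annihilating `L`. -/
lemma exists_pos_annihilator {Ω : Type*} [MeasurableSpace Ω] {μ : Measure Ω}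
    [IsFiniteMeasure μ] {L : Submodule ℝ (Ω → ℝ)} (hL : ClosedDown μ L) (hna : NoArb μ L) :
    ∃ z : Ω → ℝ, Measurable z ∧ MemLp z 2 μ ∧ (∀ᵐ ω ∂μ, 0 < z ω) ∧
      ∀ m ∈ L, MemLp m 2 μ → ∫ ω, z ω * m ω ∂μ = 0 := by
  set S : Set ENNReal := {r | ∃ z : Lp ℝ 2 μ, (∀ f ∈ dominatedCone hL, inner ℝ f z ≤ 0) ∧
    r = μ {ω | 0 < z ω}} with hS
  have hne : S.Nonempty := ⟨_, 0, fun f _ => by simp, rfl⟩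
  obtain ⟨r, -, hr, hrS⟩ := exists_seq_tendsto_sSup hne (OrderTop.bddAbove S)
  choose z hz hrz using hrS
  obtain ⟨Z, hZ, hzZ⟩ := exists_polar_dominating hL z hz
  have hmax : ∀ r ∈ S, r ≤ μ {ω | 0 < Z ω} := fun s hs =>
    (le_sSup hs).trans (le_of_tendsto' hr fun n => (hrz n).trans_le (hzZ n))
  have hZm : Measurable Z := (Lp.stronglyMeasurable Z).measurable
  have hposm : MeasurableSet {ω | 0 < Z ω} := measurableSet_lt measurable_const hZm
  have hnull : μ {ω | 0 < Z ω}ᶜ = 0 := by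
    by_contra hμ
    obtain ⟨y, hy, hint⟩ := exists_polar_setIntegral_pos hL hna hposm.compl hμ
    have hym : Measurable y := (Lp.stronglyMeasurable y).measurable
    have hypos : μ ({ω | 0 < Z ω}ᶜ ∩ {ω | 0 < y ω}) ≠ 0 := by
      intro h0
      refine hint.not_ge (setIntegral_nonpos_ae hposm.compl ?_)
      filter_upwards [measure_eq_zero_iff_ae_notMem.1 h0] with ω h1 h2
      exact not_lt.1 fun h3 => h1 ⟨h2, h3⟩
    have hle : μ ({ω | 0 < Z ω} ∪ ({ω | 0 < Z ω}ᶜ ∩ {ω | 0 < y ω})) ≤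
        μ {ω | 0 < Z ω} := by
      refine le_trans (measure_mono_ae ?_) (hmax _ ⟨Z + y, fun f hf => ?_, rfl⟩)
      · filter_upwards [Lp.coeFn_add Z y, (Lp.coeFn_nonneg Z).2 (nonneg_of_polar hL hZ),
          (Lp.coeFn_nonneg y).2 (nonneg_of_polar hL hy)] with ω h1 h2 h3 h4
        change 0 < (Z + y : Lp ℝ 2 μ) ω
        rw [h1]
        rcases h4 with h4 | h4
        · exact add_pos_of_pos_of_nonneg h4 h3
        · exact add_pos_of_nonneg_of_pos h2 h4.2
      · rw [inner_add_right]
        linarith [hZ f hf, hy f hf]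
    rw [measure_union (disjoint_compl_right.mono_right Set.inter_subset_left)
      (hposm.compl.inter (measurableSet_lt measurable_const hym))] at hle
    exact hle.not_gt (ENNReal.lt_add_right (measure_ne_top μ _) hypos)
  have hint : ∀ m ∈ L, MemLp m 2 μ → ∫ ω, Z ω * m ω ∂μ ≤ 0 := by
    intro m hm hm2
    have h := hZ (hm2.toLp m) ⟨m, hm, hm2.coeFn_toLp.le⟩
    rw [L2.inner_def] at h
    refine (integral_congr_ae ?_).trans_le h
    filter_upwards [hm2.coeFn_toLp] with ω hω
    simp [hω]
  refine ⟨Z, hZm, Lp.memLp Z, ?_, fun m hm hm2 => le_antisymm (hint m hm hm2) ?_⟩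
  · filter_upwards [measure_eq_zero_iff_ae_notMem.1 hnull] with ω hω
    exact not_not.1 hω
  · have h := hint (-m) (L.neg_mem hm) hm2.neg
    simp only [Pi.neg_apply, mul_neg, integral_neg] at h
    linarith

/-- One step of the supermartingale property of a martingale transform bounded below by an
integrable random variable. -/
lemma integrable_add_transform {Ω ι : Type*} {G m0 : MeasurableSpace Ω} (hG : G ≤ m0)
    {Q : Measure Ω} [IsProbabilityMeasure Q] {V : Ω → ℝ} (hV : Measurable[G] V)
    (A : Finset ι) {H ξ : ι → Ω → ℝ} (hH : ∀ j ∈ A, Measurable[G] (H j))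
    (hξ : ∀ j ∈ A, Integrable (ξ j) Q) (hξ0 : ∀ j ∈ A, Q[ξ j | G] =ᵐ[Q] 0)
    (hind : ∀ Z, Integrable Z Q → (∀ᵐ ω ∂Q, -Z ω ≤ V ω) → Integrable V Q ∧ ∫ ω, V ω ∂Q ≤ 0)
    {Z : Ω → ℝ} (hZ : Integrable Z Q) (hle : ∀ᵐ ω ∂Q, -Z ω ≤ V ω + ∑ j ∈ A, H j ω * ξ j ω) :
    Integrable (fun ω => V ω + ∑ j ∈ A, H j ω * ξ j ω) Q ∧
      ∫ ω, (V ω + ∑ j ∈ A, H j ω * ξ j ω) ∂Q ≤ 0 := by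
  set D : Ω → ℝ := fun ω => ∑ j ∈ A, H j ω * ξ j ω with hD
  set S : Ω → ℝ := fun ω => ‖V ω‖ + ∑ j ∈ A, ‖H j ω‖ with hS
  have hSm : Measurable[G] S := (measurable_norm.comp hV).add
    (Finset.measurable_fun_sum _ fun j hj => measurable_norm.comp (hH j hj))
  set B : ℕ → Set Ω := fun n => {ω | S ω ≤ n} with hB
  have hBm : ∀ n, MeasurableSet[G] (B n) := fun n => hSm measurableSet_Iic
  have hVB : ∀ n, ∀ ω ∈ B n, ‖V ω‖ ≤ n := fun n ω hω =>
    le_trans (le_add_of_nonneg_right (Finset.sum_nonneg fun _ _ => norm_nonneg _)) hω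
  have hHB : ∀ n, ∀ j ∈ A, ∀ ω ∈ B n, ‖H j ω‖ ≤ n := fun n j hj ω hω =>
    ((Finset.single_le_sum (f := fun j => ‖H j ω‖) (fun _ _ => norm_nonneg _) hj).trans
      (le_add_of_nonneg_left (norm_nonneg _))).trans hω
  have hcover : AECover Q atTop B := by
    refine ⟨ae_of_all _ fun ω => ?_, fun n => hG _ (hBm n)⟩
    obtain ⟨k, hk⟩ := exists_nat_ge (S ω)
    filter_upwards [eventually_ge_atTop k] with n hn
    exact hk.trans (by exact_mod_cast hn)
  have hVi : ∀ n, IntegrableOn V (B n) Q := fun n =>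
    Measure.integrableOn_of_bounded (M := n) (measure_ne_top _ _)
      (hV.mono hG le_rfl).aestronglyMeasurable
      ((ae_restrict_iff' (hG _ (hBm n))).2 (ae_of_all _ (hVB n)))
  -- truncated terms
  have hterm : ∀ n, ∀ j ∈ A, Integrable (fun ω => (B n).indicator (H j) ω * ξ j ω) Q := by
    intro n j hj
    refine (hξ j hj).bdd_mul (c := n) ?_ (ae_of_all _ fun ω => ?_)
    · exact (((hH j hj).indicator (hBm n)).mono hG le_rfl).aestronglyMeasurable
    · by_cases hω : ω ∈ B n
      · simpa [hω] using hHB n j hj ω hω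
      · simp [hω]
  have hDind : ∀ n, (B n).indicator D = fun ω => ∑ j ∈ A, (B n).indicator (H j) ω * ξ j ω := by
    intro n
    funext ω
    by_cases hω : ω ∈ B n <;> simp [hω, hD]
  have hDi : ∀ n, IntegrableOn D (B n) Q := by
    intro n
    rw [← integrable_indicator_iff (hG _ (hBm n)), hDind]
    exact integrable_finsetSum _ fun j hj => hterm n j hj
  have hDcond : ∀ n, Q[(B n).indicator D | G] =ᵐ[Q] 0 := by
    intro n
    have hsum : (B n).indicator D = ∑ j ∈ A, (B n).indicator (H j) * ξ j := by
      rw [hDind]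
      funext ω
      simp
    have hj : ∀ᵐ ω ∂Q, ∀ j ∈ A, (Q[(B n).indicator (H j) * ξ j | G]) ω = 0 := by
      refine (ae_ball_iff A.countable_toSet).2 fun j hj => ?_
      filter_upwards [condExp_mul_of_stronglyMeasurable_left (m := G) (μ := Q)
        ((hH j hj).indicator (hBm n)).stronglyMeasurable (hterm n j hj) (hξ j hj),
        hξ0 j hj] with ω h2 h3
      rw [h2, Pi.mul_apply, h3, Pi.zero_apply, mul_zero]
    rw [hsum]
    filter_upwards [condExp_finsetSum (s := A)
      (f := fun j => (B n).indicator (H j) * ξ j) (fun j hj => hterm n j hj) G, hj] with ω h1 h2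
    rw [h1, Finset.sum_apply, Finset.sum_eq_zero h2, Pi.zero_apply]
  set E : Ω → ℝ := Q[fun ω => |Z ω| | G] with hE
  have hEV : ∀ᵐ ω ∂Q, -E ω ≤ V ω := by
    have hn : ∀ n, ∀ᵐ ω ∂Q, 0 ≤ (B n).indicator (fun ω => V ω + E ω) ω := by
      intro n
      have h1 := condExp_indicator (m := G) hZ.abs (hBm n)
      have hVi' := (integrable_indicator_iff (hG _ (hBm n))).2 (hVi n)
      have hDi' := (integrable_indicator_iff (hG _ (hBm n))).2 (hDi n)
      have hZi' := hZ.abs.indicator (hG _ (hBm n))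
      have h2 := condExp_add (hVi'.add hDi') hZi' G
      have h3 := condExp_add hVi' hDi' G
      have h4 := condExp_of_stronglyMeasurable hG (hV.indicator (hBm n)).stronglyMeasurable hVi'
      have h5 : 0 ≤ᵐ[Q] Q[(B n).indicator V + (B n).indicator D +
          (B n).indicator (fun ω => |Z ω|) | G] := by
        refine condExp_nonneg ?_
        filter_upwards [hle] with ω hω
        by_cases hB : ω ∈ B n
        · simp only [Pi.add_apply, Set.indicator_of_mem hB, Pi.zero_apply]
          linarith [le_abs_self (Z ω)]
        · simp [hB]
      filter_upwards [h1, h2, h3, h5, hDcond n] with ω h1 h2 h3 h5 h6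
      rw [h2, Pi.add_apply, h3, Pi.add_apply, h1, h4, h6] at h5
      by_cases hB : ω ∈ B n
      · simpa [hB] using h5
      · simp [hB]
    filter_upwards [ae_all_iff.2 hn] with ω hω
    obtain ⟨k, hk⟩ := exists_nat_ge (S ω)
    have := hω k
    rw [Set.indicator_of_mem (show ω ∈ B k from hk)] at this
    linarith
  obtain ⟨hVint, hVle⟩ := hind E integrable_condExp hEV
  have hW0 : ∀ᵐ ω ∂Q, 0 ≤ V ω + D ω + |Z ω| := by
    filter_upwards [hle] with ω hω
    linarith [le_abs_self (Z ω)]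
  have hWB : ∀ n, IntegrableOn (fun ω => V ω + D ω + |Z ω|) (B n) Q := fun n =>
    ((hVi n).add (hDi n)).add hZ.abs.integrableOn
  have hlim : Tendsto (fun n => ∫ ω in B n, (V ω + D ω + |Z ω|) ∂Q) atTop
      (𝓝 (∫ ω, (V ω + |Z ω|) ∂Q)) := by
    have h1 : ∀ n, ∫ ω in B n, (V ω + D ω + |Z ω|) ∂Q = ∫ ω in B n, (V ω + |Z ω|) ∂Q := by
      intro n
      have h2 : ∫ ω in B n, D ω ∂Q = 0 := by
        rw [← integral_indicator (hG _ (hBm n)), ← integral_condExp hG]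
        exact integral_eq_zero_of_ae (hDcond n)
      have hVD : IntegrableOn (fun ω => V ω + D ω) (B n) Q := (hVi n).add (hDi n)
      rw [integral_add hVD hZ.abs.integrableOn, integral_add (hVi n) (hDi n), h2,
        integral_add (hVi n) hZ.abs.integrableOn, add_zero]
    simp only [h1]
    exact hcover.integral_tendsto_of_countably_generated (hVint.add hZ.abs)
  have hWint := hcover.integrable_of_integral_tendsto_of_nonneg_ae _ hWB hW0 hlim
  have hWeq := hcover.integral_eq_of_tendsto_of_nonneg_ae _ hW0 hWB hlim
  have hVD : Integrable (fun ω => V ω + D ω) Q := by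
    refine (hWint.sub hZ.abs).congr (ae_of_all _ fun ω => ?_)
    simp
  refine ⟨hVD, ?_⟩
  rw [integral_add hVD hZ.abs, integral_add hVint hZ.abs] at hWeq
  linarith

/-- Under a martingale measure, a gain bounded below by an integrable random variable is integrable
with nonpositive expectation. -/
lemma gains_integral_nonpos {Ω : Type*} {J : ℕ} [m0 : MeasurableSpace Ω]
    {P Q : Measure Ω} {F : ℕ → MeasurableSpace Ω} (hFmono : Monotone F) (hFle : ∀ t, F t ≤ m0)
    {T : ℕ} {A : Finset (Fin J)} {X : Fin J → ℕ → Ω → ℝ}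
    (hX : ∀ j ∈ A, ∀ t, t ≤ T → Measurable[F t] (X j t))
    (hQ : Q ∈ martMeasures P F T A X) {k : Ω → ℝ} (hk : k ∈ gainsSet F T A X) {Z : Ω → ℝ}
    (hZ : Integrable Z Q) (hle : ∀ᵐ ω ∂Q, -Z ω ≤ k ω) :
    Integrable k Q ∧ ∫ ω, k ω ∂Q ≤ 0 := by
  obtain ⟨hQp, -, -, hQm⟩ := hQ
  obtain ⟨H, hH, rfl⟩ := hk
  have hcomm : ∀ t, (fun ω => ∑ j ∈ A, ∑ s ∈ Finset.Icc 1 t, H j s ω * (X j s ω - X j (s - 1) ω)) =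
      fun ω => ∑ s ∈ Finset.Icc 1 t, ∑ j ∈ A, H j s ω * (X j s ω - X j (s - 1) ω) := fun t =>
    funext fun ω => Finset.sum_comm
  rw [hcomm] at hle ⊢
  suffices h : ∀ t ≤ T, ∀ Z, Integrable Z Q →
      (∀ᵐ ω ∂Q, -Z ω ≤ ∑ s ∈ Finset.Icc 1 t, ∑ j ∈ A, H j s ω * (X j s ω - X j (s - 1) ω)) →
      Integrable (fun ω =>
        ∑ s ∈ Finset.Icc 1 t, ∑ j ∈ A, H j s ω * (X j s ω - X j (s - 1) ω)) Q ∧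
      ∫ ω, ∑ s ∈ Finset.Icc 1 t, ∑ j ∈ A, H j s ω * (X j s ω - X j (s - 1) ω) ∂Q ≤ 0 from
    h T le_rfl Z hZ hle
  intro t
  induction t with
  | zero => intro _ Z _ _; simp
  | succ t ih =>
    intro ht Z hZ hle
    simp only [Finset.sum_Icc_succ_top (show 1 ≤ t + 1 by omega), Nat.add_sub_cancel] at hle ⊢
    refine integrable_add_transform (hFle t) ?_ A (H := fun j => H j (t + 1))
      (ξ := fun j ω => X j (t + 1) ω - X j t ω) (fun j hj => hH j hj (t + 1) (by omega) ht)
      (fun j hj => ((hQm j hj).1 _ ht).sub ((hQm j hj).1 _ (by omega))) (fun j hj => ?_)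
      (ih (by omega)) hZ hle
    · refine Finset.measurable_fun_sum _ fun s hs => Finset.measurable_fun_sum _ fun j hj => ?_
      rw [Finset.mem_Icc] at hs
      exact ((hH j hj s hs.1 (by omega)).mono (hFmono (by omega)) le_rfl).mul
        (((hX j hj s (by omega)).mono (hFmono (by omega)) le_rfl).sub
          ((hX j hj (s - 1) (by omega)).mono (hFmono (by omega)) le_rfl))
    · have h1 := condExp_sub ((hQm j hj).1 (t + 1) ht) ((hQm j hj).1 t (by omega)) (F t)
      have h2 := (hQm j hj).2 t (t + 1) (by omega) ht
      have h3 := condExp_of_stronglyMeasurable (hFle t)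
        (hX j hj t (by omega)).stronglyMeasurable ((hQm j hj).1 t (by omega))
      filter_upwards [h1, h2] with ω h4 h5
      refine h4.trans ?_
      rw [Pi.sub_apply, h3, ← h5, sub_self, Pi.zero_apply]

/-- Finitely many random variables are square integrable under an equivalent finite measure. -/
lemma exists_equiv_measure_memLp {Ω κ : Type*} [Fintype κ] [MeasurableSpace Ω] (P : Measure Ω)
    [IsFiniteMeasure P] (f : κ → Ω → ℝ) (hf : ∀ k, Measurable (f k)) :
    ∃ μ : Measure Ω, IsFiniteMeasure μ ∧ μ ≪ P ∧ P ≪ μ ∧ ∀ k, MemLp (f k) 2 μ := by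
  set d : Ω → ℝ := fun ω => (1 + ∑ k, f k ω ^ 2)⁻¹ with hd
  have hsum : ∀ ω, 0 ≤ ∑ k, f k ω ^ 2 := fun ω => Finset.sum_nonneg fun k _ => sq_nonneg _
  have hdpos : ∀ ω, 0 < d ω := fun ω => inv_pos.2 (by linarith [hsum ω])
  have hdle : ∀ ω, d ω ≤ 1 := fun ω => inv_le_one_of_one_le₀ (by linarith [hsum ω])
  have hdm : Measurable d :=
    (measurable_const.add (Finset.measurable_fun_sum _ fun k _ => (hf k).pow_const 2)).inv
  have hdi : Integrable d P :=
    Integrable.of_bound hdm.aestronglyMeasurable 1 (ae_of_all _ fun ω => by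
      rw [Real.norm_of_nonneg (hdpos ω).le]; exact hdle ω)
  refine ⟨P.withDensity fun ω => ENNReal.ofReal (d ω),
    isFiniteMeasure_withDensity_ofReal hdi.2, withDensity_absolutelyContinuous _ _,
    withDensity_absolutelyContinuous' hdm.ennreal_ofReal.aemeasurable
      (ae_of_all _ fun ω => (ENNReal.ofReal_pos.2 (hdpos ω)).ne'), fun k => ?_⟩
  rw [memLp_two_iff_integrable_sq (hf k).aestronglyMeasurable,
    integrable_withDensity_iff_integrable_smul' hdm.ennreal_ofReal
      (ae_of_all _ fun ω => ENNReal.ofReal_lt_top)]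
  refine Integrable.of_bound
    (hdm.ennreal_ofReal.ennreal_toReal.mul ((hf k).pow_const 2)).aestronglyMeasurable 1
    (ae_of_all _ fun ω => ?_)
  rw [smul_eq_mul, ENNReal.toReal_ofReal (hdpos ω).le,
    Real.norm_of_nonneg (mul_nonneg (hdpos ω).le (sq_nonneg _)), hd,
    inv_mul_le_one₀ (by linarith [hsum ω])]
  have h : f k ω ^ 2 ≤ ∑ k, f k ω ^ 2 :=
    Finset.single_le_sum (f := fun k => f k ω ^ 2) (fun k _ => sq_nonneg _) (Finset.mem_univ k)
  linarith

/-- Normalizing a square integrable positive density. -/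
lemma exists_equiv_probability {Ω : Type*} [MeasurableSpace Ω] {μ : Measure Ω}
    [IsFiniteMeasure μ] {z : Ω → ℝ} (hz : Measurable z) (hz2 : MemLp z 2 μ)
    (hpos : ∀ᵐ ω ∂μ, 0 < z ω) (hc : 0 < ∫ ω, z ω ∂μ) :
    ∃ Q : Measure Ω, IsProbabilityMeasure Q ∧ Q ≪ μ ∧ μ ≪ Q ∧
      ∀ g, MemLp g 2 μ → Integrable g Q ∧
        ∫ ω, g ω ∂Q = (∫ ω, z ω ∂μ)⁻¹ * ∫ ω, z ω * g ω ∂μ := by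
  set c := ∫ ω, z ω ∂μ with hcdef
  have hzi : Integrable z μ := hz2.integrable (by norm_num)
  set d : Ω → ENNReal := fun ω => ENNReal.ofReal (c⁻¹ * z ω) with hd
  have hdm : Measurable d := (hz.const_mul _).ennreal_ofReal
  have hdtop : ∀ᵐ ω ∂μ, d ω < ⊤ := ae_of_all _ fun ω => ENNReal.ofReal_lt_top
  have hnn : 0 ≤ᵐ[μ] fun ω => c⁻¹ * z ω := by
    filter_upwards [hpos] with ω hω
    exact mul_nonneg (inv_pos.2 hc).le hω.le
  have hreal : ∀ g : Ω → ℝ, (fun ω => (d ω).toReal • g ω) =ᵐ[μ] fun ω => c⁻¹ * (z ω * g ω) := by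
    intro g
    filter_upwards [hnn] with ω hω
    rw [hd, smul_eq_mul, ENNReal.toReal_ofReal hω, mul_assoc]
  refine ⟨μ.withDensity d, ⟨?_⟩, withDensity_absolutelyContinuous _ _,
    withDensity_absolutelyContinuous' hdm.aemeasurable ?_, fun g hg => ⟨?_, ?_⟩⟩
  · rw [withDensity_apply _ MeasurableSet.univ, Measure.restrict_univ,
      ← ofReal_integral_eq_lintegral_ofReal (hzi.const_mul _) hnn, integral_const_mul,
      inv_mul_cancel₀ hc.ne', ENNReal.ofReal_one]
  · filter_upwards [hpos] with ω hω
    exact (ENNReal.ofReal_pos.2 (mul_pos (inv_pos.2 hc) hω)).ne'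
  · rw [integrable_withDensity_iff_integrable_smul' hdm hdtop, integrable_congr (hreal g)]
    exact (hz2.integrable_mul hg).const_mul _
  · rw [integral_withDensity_eq_integral_toReal_smul hdm hdtop, integral_congr_ae (hreal g),
      integral_const_mul]

/-- Centred increments over past events characterize martingales. -/
lemma eq_condExp_of_setIntegral_increment {Ω : Type*} {m0 : MeasurableSpace Ω} {Q : Measure Ω}
    [IsFiniteMeasure Q] {F : ℕ → MeasurableSpace Ω} (hF : Monotone F) (hFle : ∀ t, F t ≤ m0)
    {T : ℕ} {x : ℕ → Ω → ℝ} (hx : ∀ t ≤ T, Measurable[F t] (x t))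
    (hint : ∀ t ≤ T, Integrable (x t) Q)
    (hinc : ∀ n < T, ∀ A, MeasurableSet[F n] A → ∫ ω in A, (x (n + 1) ω - x n ω) ∂Q = 0)
    {s t : ℕ} (hst : s ≤ t) (ht : t ≤ T) : x s =ᵐ[Q] Q[x t | F s] := by
  have key : ∀ A, MeasurableSet[F s] A → ∫ ω in A, x s ω ∂Q = ∫ ω in A, x t ω ∂Q := by
    intro A hA
    induction t, hst using Nat.le_induction with
    | base => rfl
    | succ n hn ih =>
      have h := hinc n ht A (hF hn _ hA)
      rw [integral_sub (hint _ ht).integrableOn (hint _ (by omega)).integrableOn] at h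
      rw [ih (by omega)]
      linarith
  exact ae_eq_condExp_of_forall_setIntegral_eq (hFle s) (hint t ht)
    (fun A _ _ => (hint s (hst.trans ht)).integrableOn) (fun A hA _ => key A hA)
    (hx s (hst.trans ht)).stronglyMeasurable.aestronglyMeasurable

/-- The σ-algebra on `Fin N × Ω` whose slices are the `G i`. -/
@[reducible]
def sliceSpace {Ω : Type*} {N : ℕ} (G : Fin N → MeasurableSpace Ω) :
    MeasurableSpace (Fin N × Ω) :=
  ⨅ i, (G i).map (Prod.mk i)

lemma measurable_sliceSpace {Ω : Type*} {N : ℕ} {G : Fin N → MeasurableSpace Ω}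
    {f : Fin N × Ω → ℝ} :
    Measurable[sliceSpace G] f ↔ ∀ i, Measurable[G i] fun ω => f (i, ω) := by
  refine ⟨fun h i s hs => ?_, fun h s hs => ?_⟩
  · exact MeasurableSpace.measurableSet_iInf.1 (h hs) i
  · exact MeasurableSpace.measurableSet_iInf.2 fun i => h i hs

lemma sliceSpace_mono {Ω : Type*} {N : ℕ} {F : Fin N → ℕ → MeasurableSpace Ω}
    (hF : ∀ i, Monotone (F i)) : Monotone fun n => sliceSpace fun i => F i n :=
  fun _ _ h => iInf_mono fun i => MeasurableSpace.map_mono (hF i h)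

/-- The measure on `Fin N × Ω` whose slices are all `μ`. -/
noncomputable def sliceMeasure {Ω : Type*} [MeasurableSpace Ω] (N : ℕ) (μ : Measure Ω) :
    Measure (Fin N × Ω) :=
  ∑ i : Fin N, μ.map (Prod.mk i)

section sliceMeasure

variable {Ω : Type*} [MeasurableSpace Ω] {N : ℕ} {μ : Measure Ω}

instance [IsFiniteMeasure μ] : IsFiniteMeasure (sliceMeasure N μ) := by
  unfold sliceMeasure
  infer_instance

lemma ae_sliceMeasure {p : Fin N × Ω → Prop} :
    (∀ᵐ a ∂sliceMeasure N μ, p a) ↔ ∀ i, ∀ᵐ ω ∂μ, p (i, ω) := by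
  rw [sliceMeasure, ← Measure.sum_fintype, Measure.ae_sum_iff]
  exact forall_congr' fun i => (measurableEmbedding_prodMk_left i).ae_map_iff

lemma memLp_sliceMeasure {f : Fin N × Ω → ℝ} (hf : Measurable f) :
    MemLp f 2 (sliceMeasure N μ) ↔ ∀ i, MemLp (fun ω => f (i, ω)) 2 μ := by
  rw [memLp_two_iff_integrable_sq hf.aestronglyMeasurable, sliceMeasure,
    integrable_finsetSum_measure]
  simp only [Finset.mem_univ, forall_const,
    (measurableEmbedding_prodMk_left _).integrable_map_iff]
  exact forall_congr' fun i =>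
    (memLp_two_iff_integrable_sq (hf.comp measurable_prodMk_left).aestronglyMeasurable).symm

lemma integral_sliceMeasure {f : Fin N × Ω → ℝ} (hf : Integrable f (sliceMeasure N μ)) :
    ∫ a, f a ∂sliceMeasure N μ = ∑ i, ∫ ω, f (i, ω) ∂μ := by
  rw [sliceMeasure, integral_finsetSum_measure (integrable_finsetSum_measure.1 hf)]
  exact Finset.sum_congr rfl fun i _ => (measurableEmbedding_prodMk_left i).integral_map f

end sliceMeasure

/-- The one-period gain from asset `j`, for the agents that trade it. -/
def agentIncrement {Ω : Type*} {J N : ℕ} (assets : Fin N → Finset (Fin J))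
    (X : Fin J → ℕ → Ω → ℝ) (n : ℕ) (j : Fin J) (a : Fin N × Ω) : ℝ :=
  if j ∈ assets a.1 then X j (n + 1) a.2 - X j n a.2 else 0

/-- Generators of the exchange space: the given exchanges and the unit transfers between agents. -/
def exchange {Ω : Type*} {N R : ℕ} (Ys : Fin R → Fin N → Ω → ℝ) :
    Fin R ⊕ (Fin N × Fin N) → Fin N × Ω → ℝ
  | .inl r, a => Ys r a.1 a.2
  | .inr p, a => (Pi.single p.1 1 - Pi.single p.2 1 : Fin N → ℝ) a.1

/-- Collective gains plus exchanges, as a space of functions on `Fin N × Ω`. -/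
def collectiveGains {Ω : Type*} {J N R : ℕ} (F : Fin N → ℕ → MeasurableSpace Ω) (T : ℕ)
    (assets : Fin N → Finset (Fin J)) (X : Fin J → ℕ → Ω → ℝ) (Ys : Fin R → Fin N → Ω → ℝ) :
    Submodule ℝ (Fin N × Ω → ℝ) :=
  lateGains (fun n => sliceSpace fun i => F i n) (agentIncrement assets X) T T ⊔
    Finset.univ.sup fun κ => multiples ⊥ (exchange Ys κ)

/-- The gains set of an agent as a subspace. -/
def gainsSubmodule {Ω : Type*} {J : ℕ} (F : ℕ → MeasurableSpace Ω) (T : ℕ)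
    (A : Finset (Fin J)) (X : Fin J → ℕ → Ω → ℝ) : Submodule ℝ (Ω → ℝ) where
  carrier := gainsSet F T A X
  zero_mem' := ⟨0, fun _ _ _ _ _ => measurable_const, by
    funext ω
    simp⟩
  add_mem' := by
    rintro _ _ ⟨H, hH, rfl⟩ ⟨H', hH', rfl⟩
    refine ⟨H + H', fun j hj s h1 h2 => (hH j hj s h1 h2).add (hH' j hj s h1 h2), ?_⟩
    funext ω
    simp only [Pi.add_apply, add_mul, Finset.sum_add_distrib]
  smul_mem' := by
    rintro c _ ⟨H, hH, rfl⟩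
    refine ⟨c • H, fun j hj s h1 h2 => (hH j hj s h1 h2).const_smul c, ?_⟩
    funext ω
    simp only [Pi.smul_apply, smul_eq_mul, mul_assoc, Finset.mul_sum]

/-- The exchange space as a subspace. -/
def exchSubmodule {Ω : Type*} {N R : ℕ} (Ys : Fin R → Fin N → Ω → ℝ) :
    Submodule ℝ (Fin N → Ω → ℝ) where
  carrier := spanExch Ys
  zero_mem' := ⟨0, 0, by simp, fun i => by
    funext ω
    simp⟩
  add_mem' := by
    rintro y y' ⟨x, c, hx, hy⟩ ⟨x', c', hx', hy'⟩
    refine ⟨x + x', c + c', by simp [Finset.sum_add_distrib, hx, hx'], fun i => ?_⟩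
    funext ω
    simp only [Pi.add_apply, hy, hy', add_mul, Finset.sum_add_distrib]
    ring
  smul_mem' := by
    rintro b y ⟨x, c, hx, hy⟩
    refine ⟨b • x, b • c, by simp [← Finset.mul_sum, hx], fun i => ?_⟩
    funext ω
    simp only [Pi.smul_apply, smul_eq_mul, hy, mul_add, mul_assoc, Finset.mul_sum]

/-- Each element of `collectiveGains` is a tuple of gains plus an exchange. -/
lemma exists_gains_add_exchange {Ω : Type*} {J N R : ℕ} {F : Fin N → ℕ → MeasurableSpace Ω}
    {T : ℕ} {assets : Fin N → Finset (Fin J)} {X : Fin J → ℕ → Ω → ℝ}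
    {Ys : Fin R → Fin N → Ω → ℝ} {m : Fin N × Ω → ℝ}
    (hm : m ∈ collectiveGains F T assets X Ys) :
    ∃ k : Fin N → Ω → ℝ, ∃ y ∈ spanExch Ys, (∀ i, k i ∈ gainsSet (F i) T (assets i) X) ∧
      ∀ i ω, m (i, ω) = k i ω + y i ω := by
  classical
  let slice : (Fin N → Ω → ℝ) →ₗ[ℝ] (Fin N × Ω → ℝ) :=
    { toFun := fun k a => k a.1 a.2, map_add' := fun _ _ => rfl, map_smul' := fun _ _ => rfl }
  let W : Submodule ℝ (Fin N × Ω → ℝ) :=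
    (Submodule.pi Set.univ fun i => gainsSubmodule (F i) T (assets i) X).map slice ⊔
      (exchSubmodule Ys).map slice
  have hW : collectiveGains F T assets X Ys ≤ W := by
    refine sup_le (lateGains_le ?_ le_rfl) (Finset.sup_le fun κ _ => ?_)
    · rintro n hn j _ ⟨H, hH, rfl⟩
      refine Submodule.mem_sup_left ⟨fun i ω => H (i, ω) * agentIncrement assets X n j (i, ω),
        fun i _ => ⟨fun j' s ω => if j' = j ∧ s = n + 1 then H (i, ω) else 0, ?_, ?_⟩, rfl⟩
      · intro j' _ s _ _
        by_cases h : j' = j ∧ s = n + 1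
        · obtain ⟨rfl, rfl⟩ := h
          simpa using measurable_sliceSpace.1 hH i
        · simp only [h, if_false]
          exact measurable_const
      · funext ω
        simp only [ite_and, ite_mul, zero_mul, Finset.sum_ite_eq', Finset.sum_ite_irrel,
          Finset.sum_const_zero, agentIncrement]
        simp [hn, mul_ite]
    · rintro _ ⟨H, hH, rfl⟩
      obtain ⟨c, rfl⟩ := eq_const_of_measurable_bot hH
      refine Submodule.smul_mem _ c (Submodule.mem_sup_right ?_)
      rcases κ with r | ⟨a, b⟩
      · refine ⟨Ys r, ⟨0, Pi.single r 1, by simp, fun i => ?_⟩, rfl⟩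
        funext ω
        simp [Pi.single_apply]
      · exact ⟨fun i _ => (Pi.single a 1 - Pi.single b 1 : Fin N → ℝ) i,
          ⟨Pi.single a 1 - Pi.single b 1, 0, by simp, fun i => by simp⟩, rfl⟩
  obtain ⟨_, ⟨k, hk, rfl⟩, _, ⟨y, hy, rfl⟩, rfl⟩ := Submodule.mem_sup.1 (hW hm)
  exact ⟨k, y, hy, fun i => hk i trivial, fun i ω => rfl⟩

lemma noArb_collectiveGains {Ω : Type*} {J N R : ℕ} [MeasurableSpace Ω] {P μ : Measure Ω}
    (hPμ : P ≪ μ) (hμP : μ ≪ P) {F : Fin N → ℕ → MeasurableSpace Ω}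
    {T : ℕ} {assets : Fin N → Finset (Fin J)} {X : Fin J → ℕ → Ω → ℝ}
    {Ys : Fin R → Fin N → Ω → ℝ}
    (h : NCA P (fun i => gainsSet (F i) T (assets i) X) (spanExch Ys)) :
    NoArb (sliceMeasure N μ) (collectiveGains F T assets X Ys) := by
  intro m hm hm0
  obtain ⟨k, y, hy, hk, hky⟩ := exists_gains_add_exchange hm
  have h0 := h k y hy hk fun i => hPμ.ae_le <| by
    filter_upwards [ae_sliceMeasure.1 hm0 i] with ω hω
    rw [← hky]
    exact hω
  refine ae_sliceMeasure.2 fun i => ?_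
  filter_upwards [hμP.ae_le (h0 i)] with ω hω
  rw [hky]
  exact hω

lemma closedDown_collectiveGains {Ω : Type*} {J N R : ℕ} [MeasurableSpace Ω] {μ : Measure Ω}
    {F : Fin N → ℕ → MeasurableSpace Ω} (hF : ∀ i, Monotone (F i))
    {T : ℕ} {assets : Fin N → Finset (Fin J)} {X : Fin J → ℕ → Ω → ℝ}
    {Ys : Fin R → Fin N → Ω → ℝ}
    (hna : NoArb (sliceMeasure N μ) (collectiveGains F T assets X Ys)) :
    ClosedDown (sliceMeasure N μ) (collectiveGains F T assets X Ys) := by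
  have hG := sliceSpace_mono hF
  exact ((isStable_lateGains hG _ T T).mono bot_le).closedDown_sup_finset_multiples
    (closedDown_lateGains hG _ T T (hna.mono le_sup_left)) _ _ hna

lemma NCA_of_mem_MeY {Ω : Type*} {J N : ℕ} [m0 : MeasurableSpace Ω] {P : Measure Ω}
    {F : Fin N → ℕ → MeasurableSpace Ω} (hFmono : ∀ i, Monotone (F i))
    (hFle : ∀ i t, F i t ≤ m0) {T : ℕ} {assets : Fin N → Finset (Fin J)}
    {X : Fin J → ℕ → Ω → ℝ}
    (hadapted : ∀ i, ∀ j ∈ assets i, ∀ t, t ≤ T → Measurable[F i t] (X j t))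
    {Y : Set (Fin N → Ω → ℝ)} {Q : Fin N → Measure Ω} (hQ : Q ∈ MeY P F T assets X Y) :
    NCA P (fun i => gainsSet (F i) T (assets i) X) Y := by
  intro k y hy hk hnn i
  have hle : ∀ i, ∀ᵐ ω ∂Q i, 0 ≤ k i ω + y i ω := fun i => (hQ.1 i).2.1.ae_le (hnn i)
  have hki : ∀ i, Integrable (k i) (Q i) ∧ ∫ ω, k i ω ∂Q i ≤ 0 := fun i =>
    gains_integral_nonpos (hFmono i) (hFle i) (hadapted i) (hQ.1 i) (hk i) (hQ.2.1 y hy i) <| by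
      filter_upwards [hle i] with ω hω
      linarith
  have hint : ∀ i, Integrable (fun ω => k i ω + y i ω) (Q i) :=
    fun i => (hki i).1.add (hQ.2.1 y hy i)
  have hnn' : ∀ i ∈ Finset.univ, 0 ≤ ∫ ω, (k i ω + y i ω) ∂Q i :=
    fun i _ => integral_nonneg_of_ae (hle i)
  have hsum : ∑ i, ∫ ω, (k i ω + y i ω) ∂Q i = 0 := by
    refine le_antisymm ?_ (Finset.sum_nonneg hnn')
    simp only [fun i => integral_add (hki i).1 (hQ.2.1 y hy i), Finset.sum_add_distrib]
    exact add_nonpos (Finset.sum_nonpos fun i _ => (hki i).2) (hQ.2.2 y hy)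
  exact (hQ.1 i).2.2.1.ae_le ((integral_eq_zero_iff_of_nonneg_ae (hle i) (hint i)).1
    ((Finset.sum_eq_zero_iff_of_nonneg hnn').1 hsum i (Finset.mem_univ i)))

lemma MeY_nonempty_of_NCA {Ω : Type*} {J N R : ℕ} [m0 : MeasurableSpace Ω] {P : Measure Ω}
    [IsProbabilityMeasure P] {F : Fin N → ℕ → MeasurableSpace Ω}
    (hFmono : ∀ i, Monotone (F i)) (hFle : ∀ i t, F i t ≤ m0) {T : ℕ}
    {assets : Fin N → Finset (Fin J)} {X : Fin J → ℕ → Ω → ℝ} (hcover : ∀ j, ∃ i, j ∈ assets i)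
    (hadapted : ∀ i, ∀ j ∈ assets i, ∀ t, t ≤ T → Measurable[F i t] (X j t))
    {Ys : Fin R → Fin N → Ω → ℝ} (hYs : ∀ r i, Measurable (Ys r i))
    (h : NCA P (fun i => gainsSet (F i) T (assets i) X) (spanExch Ys)) :
    (MeY P F T assets X (spanExch Ys)).Nonempty := by
  have hXm : ∀ j t, t ≤ T → Measurable (X j t) := fun j t ht => by
    obtain ⟨i, hi⟩ := hcover j
    exact (hadapted i j hi t ht).mono (hFle i t) le_rfl
  obtain ⟨μ, hμfin, hμP, hPμ, hμ⟩ := exists_equiv_measure_memLp P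
    (κ := (Fin J × Fin (T + 1)) ⊕ (Fin R × Fin N))
    (Sum.elim (fun p => X p.1 p.2) fun p => Ys p.1 p.2) (by
      rintro (⟨j, t⟩ | ⟨r, i⟩)
      · exact hXm j t (Nat.lt_succ_iff.1 t.2)
      · exact hYs r i)
  have hX2 : ∀ j t, t ≤ T → MemLp (X j t) 2 μ := fun j t ht =>
    hμ (.inl (j, ⟨t, Nat.lt_succ_iff.2 ht⟩))
  have hY2 : ∀ r i, MemLp (Ys r i) 2 μ := fun r i => hμ (.inr (r, i))
  have hna := noArb_collectiveGains hPμ hμP h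
  obtain ⟨z, hzm, hz2, hzpos, hz⟩ := exists_pos_annihilator
    (closedDown_collectiveGains hFmono hna) hna
  have hzim : ∀ i, Measurable fun ω => z (i, ω) := fun i => hzm.comp measurable_prodMk_left
  have hzi2 := (memLp_sliceMeasure hzm).1 hz2
  have hzipos := ae_sliceMeasure.1 hzpos
  have horth : ∀ m ∈ collectiveGains F T assets X Ys, (∀ i, Measurable fun ω => m (i, ω)) →
      (∀ i, MemLp (fun ω => m (i, ω)) 2 μ) → ∑ i, ∫ ω, z (i, ω) * m (i, ω) ∂μ = 0 := by
    intro m hm hmm hm2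
    have hm2' := (memLp_sliceMeasure (measurable_from_prod_countable_right hmm)).2 hm2
    rw [← integral_sliceMeasure (f := fun a => z a * m a) (hz2.integrable_mul hm2')]
    exact hz m hm hm2'
  have hμ0 : μ ≠ 0 := fun h0 => IsProbabilityMeasure.ne_zero P
    (Measure.absolutelyContinuous_zero_iff.1 (h0 ▸ hPμ))
  have hcpos : ∀ i, 0 < ∫ ω, z (i, ω) ∂μ := fun i => by
    rw [integral_pos_iff_support_of_nonneg_ae ((hzipos i).mono fun ω hω => hω.le)
      ((hzi2 i).integrable (by norm_num)), pos_iff_ne_zero]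
    intro h0
    refine hμ0 (ae_eq_bot.1 (eventually_false_iff_eq_bot.1 ?_))
    filter_upwards [hzipos i, measure_eq_zero_iff_ae_notMem.1 h0] with ω h1 h2
    exact h2 h1.ne'
  have hexch : ∀ κ, ∑ i, ∫ ω, z (i, ω) * exchange Ys κ (i, ω) ∂μ = 0 := by
    intro κ
    refine horth _ (Submodule.mem_sup_right (Finset.le_sup
      (f := fun κ => multiples ⊥ (exchange Ys κ)) (Finset.mem_univ κ)
      ⟨1, measurable_const, (one_mul _).symm⟩)) (fun i => ?_) fun i => ?_
    · rcases κ with r | p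
      · exact hYs r i
      · simp only [exchange]
        exact measurable_const
    · rcases κ with r | p
      · exact hY2 r i
      · simp only [exchange]
        exact memLp_const _
  have hceq : ∀ a b, ∫ ω, z (a, ω) ∂μ = ∫ ω, z (b, ω) ∂μ := by
    intro a b
    have h := hexch (.inr (a, b))
    simp only [exchange, integral_mul_const] at h
    simpa [mul_sub, Pi.single_apply, sub_eq_zero] using h
  choose Q hQprob hQμ hμQ hQ using fun i =>
    exists_equiv_probability (hzim i) (hzi2 i) (hzipos i) (hcpos i)
  have hinc : ∀ i, ∀ j ∈ assets i, ∀ n < T, ∀ A, MeasurableSet[F i n] A →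
      ∫ ω in A, (X j (n + 1) ω - X j n ω) ∂Q i = 0 := by
    intro i j hj n hn A hA
    set D : Ω → ℝ := A.indicator fun ω => X j (n + 1) ω - X j n ω with hD
    have hA0 := hFle i n _ hA
    have hDm : Measurable D := ((hXm j _ hn).sub (hXm j n hn.le)).indicator hA0
    have hD2 : MemLp D 2 μ := ((hX2 j _ hn).sub (hX2 j n hn.le)).indicator hA0
    set H : Fin N × Ω → ℝ := fun a => if a.1 = i then A.indicator 1 a.2 else 0 with hH
    have hHm : Measurable[sliceSpace fun i => F i n] H := by
      refine measurable_sliceSpace.2 fun b => ?_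
      rcases eq_or_ne b i with rfl | hb
      · have h1 : Measurable[F b n] (1 : Ω → ℝ) := measurable_const
        simpa [hH] using h1.indicator hA
      · simp only [hH, hb, if_false]
        exact measurable_const
    have hslice : ∀ b, (fun ω => (H * agentIncrement assets X n j) (b, ω)) =
        if b = i then D else 0 := by
      intro b
      funext ω
      rcases eq_or_ne b i with rfl | hb
      · by_cases hω : ω ∈ A <;> simp [hH, hD, agentIncrement, hj, hω]
      · simp [hH, hb]
    have h0 := horth (H * agentIncrement assets X n j)
      (Submodule.mem_sup_left (multiples_le_lateGains _ _ hn (Nat.le_add_left T n) j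
        ⟨H, hHm, rfl⟩))
      (fun b => by
        rw [hslice]
        split_ifs
        exacts [hDm, measurable_const])
      (fun b => by
        rw [hslice]
        split_ifs
        exacts [hD2, MemLp.zero])
    rw [← integral_indicator hA0, (hQ i D hD2).2, mul_eq_zero]
    refine .inr ((Eq.symm ?_).trans h0)
    rw [Finset.sum_eq_single i]
    · simp only [fun ω => congrFun (hslice i) ω, if_true]
    · intro b _ hb
      simp only [fun ω => congrFun (hslice b) ω, hb, if_false, Pi.zero_apply, mul_zero,
        integral_zero]
    · simp
  refine ⟨Q, fun i => ⟨hQprob i, (hQμ i).trans hμP, hPμ.trans (hμQ i), fun j hj =>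
    ⟨fun t ht => (hQ i _ (hX2 j t ht)).1, fun s t hst ht => ?_⟩⟩, ?_, ?_⟩
  · exact eq_condExp_of_setIntegral_increment (hFmono i) (hFle i) (hadapted i j hj)
      (fun t ht => (hQ i _ (hX2 j t ht)).1) (hinc i j hj) hst ht
  · rintro y ⟨x, c, hx, hy⟩ i
    rw [hy]
    exact (integrable_const _).add
      (integrable_finsetSum _ fun r _ => (hQ i _ (hY2 r i)).1.const_mul _)
  · rintro y ⟨x, c, hx, hy⟩
    have hYint : ∀ r, ∑ i, ∫ ω, Ys r i ω ∂Q i = 0 := by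
      intro r
      rcases isEmpty_or_nonempty (Fin N) with hN | ⟨⟨a⟩⟩
      · simp
      · simp only [fun i => (hQ i _ (hY2 r i)).2, fun i => hceq i a, ← Finset.mul_sum]
        exact mul_eq_zero_of_right _ (hexch (.inl r))
    have hyi : ∀ i, ∫ ω, y i ω ∂Q i = x i + ∑ r, c r * ∫ ω, Ys r i ω ∂Q i := by
      intro i
      simp only [hy i]
      rw [integral_add (integrable_const _)
        (integrable_finsetSum _ fun r _ => (hQ i _ (hY2 r i)).1.const_mul _),
        integral_finsetSum _ fun r _ => (hQ i _ (hY2 r i)).1.const_mul _]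
      simp [integral_const_mul]
    simp only [hyi, Finset.sum_add_distrib, hx]
    rw [Finset.sum_comm]
    simp [← Finset.mul_sum, hYint]

/-- collective FTAP I for finite-dimensional exchange spaces. -/
theorem collective_FTAP_I_finDim
    {Ω : Type*} [m0 : MeasurableSpace Ω]
    (P : Measure Ω) [IsProbabilityMeasure P]
    (T J N : ℕ) (hT : 1 ≤ T) (hJ : 1 ≤ J) (hN : 1 ≤ N)
    (F : Fin N → ℕ → MeasurableSpace Ω)
    (hFmono : ∀ i, Monotone (F i))
    (hFle : ∀ i t, F i t ≤ m0)
    (hFzero : ∀ i, ∀ A : Set Ω, MeasurableSet[F i 0] A → P A = 0 ∨ P A = 1)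
    (X : Fin J → ℕ → Ω → ℝ)
    (assets : Fin N → Finset (Fin J))
    (hassets : ∀ i, (assets i).Nonempty)
    (hcover : ∀ j, ∃ i, j ∈ assets i)
    (hadapted : ∀ i, ∀ j ∈ assets i, ∀ t, t ≤ T → Measurable[F i t] (X j t))
    (R : ℕ) (Ys : Fin R → Fin N → Ω → ℝ)
    (hYsmeas : ∀ r i, Measurable[F i T] (Ys r i)) :
    NCA P (fun i => gainsSet (F i) T (assets i) X) (spanExch Ys) ↔
      (MeY P F T assets X (spanExch Ys)).Nonempty := by
  refine ⟨fun h => MeY_nonempty_of_NCA hFmono hFle hcover hadapted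
    (fun r i => (hYsmeas r i).mono (hFle i T) le_rfl) h, ?_⟩
  rintro ⟨Q, hQ⟩
  exact NCA_of_mem_MeY hFmono hFle hadapted hQ

end CollectiveArb
end
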